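/- arXiv:1802.05303 — 10 statements merged into one kernel-verified Lean document; each statement's English description precedes it below -/
import Mathlib

section
/- Assume there exists a set N ⊆ [0,1] of positive Lebesgue outer measure such that for every function g : N → ℕ^ℕ there exists h : ℕ → ℕ with g(x) ≤* h for all x ∈ N (i.e. non(N) < 𝔟). Then for every function Φ : [0,1] → ℕ^ℕ and every ε > 0 there exists a set A ⊆ [0,1] with m*(A) ≥ 1 − ε such that Φ[A] is bounded, i.e. there is h : ℕ → ℕ with Φ(x)(n) ≤ h(n) for every x ∈ A and every n ∈ ℕ. -/
open MeasureTheory Filter Set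

/-- A set of functions `ℕ → ℕ` is bounded if a single `h : ℕ → ℕ` dominates
all of its members everywhere. -/
def BddNatFun (S : Set (ℕ → ℕ)) : Prop :=
  ∃ h : ℕ → ℕ, ∀ f ∈ S, ∀ n, f n ≤ h n

/-!
If families indexed by `N` can be dominated, then so can families indexed by the union `M` of the
rational translates of `N`, because countably many functions have a common bound modulo finite sets.
Rational translations act ergodically on `ℝ`: invariance modulo null sets passes from a dense set
of translations to its closure. Hence the invariant set `M`, not being null, has full outer measure
in `[0, 1]`. If a single `h` dominates all `Φ x` with `x ∈ M` modulo finite sets, then `M ∩ [0, 1]`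
is the increasing union over `k` of the sets on which `Φ x ≤ h + k`, and outer measure is continuous
along increasing unions even of nonmeasurable sets.
-/

open scoped Topology symmDiff

section Domination

variable {α β ι : Type*}

/-- The property `#N < 𝔟`, in the form in which it is used: every family of functions indexed by
`N` is dominated, modulo finite sets, by a single function. Families are total functions on the
ambient type, whose values outside `N` play no role. -/
def CardLTBounding (N : Set α) : Prop :=
  ∀ g : α → ℕ → ℕ, ∃ h : ℕ → ℕ, ∀ x ∈ N, g x ≤ᶠ[atTop] h

theorem CardLTBounding.image {N : Set α} (hN : CardLTBounding N) (f : α → β) :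
    CardLTBounding (f '' N) := fun g =>
  have ⟨h, hh⟩ := hN (g ∘ f)
  ⟨h, forall_mem_image.2 hh⟩

theorem exists_forall_eventuallyLE [Countable ι] (f : ι → ℕ → ℕ) :
    ∃ h : ℕ → ℕ, ∀ i, f i ≤ᶠ[atTop] h := by
  rcases isEmpty_or_nonempty ι with _ | _
  · exact ⟨0, isEmptyElim⟩
  obtain ⟨e, he⟩ := exists_surjective_nat ι
  refine ⟨fun n => (Finset.range (n + 1)).sup fun j => f (e j) n, he.forall.2 fun j => ?_⟩
  filter_upwards [eventually_ge_atTop j] with n hjn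
  exact Finset.le_sup (f := fun j => f (e j) n) (Finset.mem_range_succ_iff.2 hjn)

theorem CardLTBounding.iUnion [Countable ι] {N : ι → Set α} (hN : ∀ i, CardLTBounding (N i)) :
    CardLTBounding (⋃ i, N i) := fun g => by
  choose h hh using fun i => hN i g
  obtain ⟨H, hH⟩ := exists_forall_eventuallyLE h
  refine ⟨H, fun x hx => ?_⟩
  obtain ⟨i, hi⟩ := mem_iUnion.1 hx
  exact (hh i x hi).trans (hH i)

theorem exists_forall_le_add_of_eventuallyLE {f h : ℕ → ℕ} (hfh : f ≤ᶠ[atTop] h) :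
    ∃ k, ∀ n, f n ≤ h n + k := by
  obtain ⟨k, hk⟩ := (isBoundedUnder_of_eventually_le (a := 0)
    (hfh.mono fun n hn => (Nat.sub_eq_zero_of_le hn).le)).bddAbove_range
  exact ⟨k, fun n => Nat.sub_le_iff_le_add'.1 (hk (mem_range_self n))⟩

theorem exists_subset_lt_measure_bddNatFun_image [MeasurableSpace α] {μ : Measure α} {M : Set α}
    {c : ENNReal} (hc : c < μ M) {Φ : α → ℕ → ℕ} {h : ℕ → ℕ} (hΦ : ∀ x ∈ M, Φ x ≤ᶠ[atTop] h) :
    ∃ A ⊆ M, c < μ A ∧ BddNatFun (Φ '' A) := by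
  let A (k : ℕ) : Set α := {x ∈ M | ∀ n, Φ x n ≤ h n + k}
  have hA_mono : Monotone A := fun k l hkl x hx =>
    ⟨hx.1, fun n => (hx.2 n).trans (Nat.add_le_add_left hkl _)⟩
  have hM : M ⊆ ⋃ k, A k := fun x hx =>
    have ⟨k, hk⟩ := exists_forall_le_add_of_eventuallyLE (hΦ x hx)
    mem_iUnion.2 ⟨k, hx, hk⟩
  have hlt : c < ⨆ k, μ (A k) := hA_mono.measure_iUnion ▸ hc.trans_le (measure_mono hM)
  obtain ⟨k, hk⟩ := lt_iSup_iff.1 hlt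
  exact ⟨A k, fun x hx => hx.1, hk, fun n => h n + k, forall_mem_image.2 fun x hx => hx.2⟩

end Domination

theorem toMeasurable_ae_le_preimage_of_mapsTo {X Y : Type*} [MeasurableSpace X]
    [MeasurableSpace Y] {μ : Measure X} [SFinite μ] {ν : Measure Y} {f : X → Y} (hf : Measurable f)
    {s : Set X} {t : Set Y} (hst : MapsTo f s t) :
    toMeasurable μ s ≤ᵐ[μ] f ⁻¹' toMeasurable ν t := by
  have hmeas : MeasurableSet (f ⁻¹' toMeasurable ν t) := hf (measurableSet_toMeasurable ν t)
  have hsub : s ⊆ f ⁻¹' toMeasurable ν t := fun x hx => subset_toMeasurable ν t (hst hx)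
  rw [ae_le_set, sdiff_eq, Measure.measure_toMeasurable_inter_of_sFinite hmeas.compl, ← sdiff_eq,
    sdiff_eq_empty.2 hsub, measure_empty]

theorem measure_inter_eq_of_forall_mapsTo_vadd (Γ : Type*) {X : Type*} [AddGroup Γ]
    [MeasurableSpace X] [AddAction Γ X] [MeasurableConstVAdd Γ X] {μ : Measure X} [SFinite μ]
    [ErgodicVAdd Γ X μ] {s t : Set X} (hs : ∀ g : Γ, MapsTo (g +ᵥ ·) s s) (hpos : μ s ≠ 0)
    (ht : MeasurableSet t) : μ (s ∩ t) = μ t := by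
  have hle (g : Γ) : toMeasurable μ s ≤ᵐ[μ] (g +ᵥ ·) ⁻¹' toMeasurable μ s :=
    toMeasurable_ae_le_preimage_of_mapsTo (measurable_const_vadd g) (hs g)
  have hinv (g : Γ) : (g +ᵥ ·) ⁻¹' toMeasurable μ s =ᵐ[μ] toMeasurable μ s := by
    refine EventuallyLE.antisymm ?_ (hle g)
    filter_upwards [(tendsto_vadd_ae μ g).eventually (hle (-g))] with x hx hgx
    have hx' : -g +ᵥ (g +ᵥ x) ∈ toMeasurable μ s := hx hgx
    rwa [neg_vadd_vadd] at hx'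
  rw [← Measure.measure_toMeasurable_inter_of_sFinite ht]
  rcases eventuallyConst_set'.1 (aeconst_of_forall_preimage_vadd_ae_eq Γ
    (measurableSet_toMeasurable μ s).nullMeasurableSet hinv) with h | h
  · exact absurd (by rw [← measure_toMeasurable, measure_congr h, measure_empty]) hpos
  · simpa using measure_congr (h.inter (ae_eq_refl t))

section DenseSubaction

variable {Z X Y : Type*} [TopologicalSpace Z]
  [TopologicalSpace X] [MeasurableSpace X] [BorelSpace X] [R1Space X]
  [TopologicalSpace Y] [MeasurableSpace Y] [BorelSpace Y] [R1Space Y]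
  {μ : Measure X} {ν : Measure Y} [μ.InnerRegularCompactLTTop] [IsLocallyFiniteMeasure ν]

theorem isClosed_setOfPred_preimage_ae_le_of_ne_top {f : Z → C(X, Y)} (hf : Continuous f)
    (hfm : ∀ z, MeasurePreserving (f z) μ ν) (s : Set X) {t : Set Y}
    (htm : NullMeasurableSet t ν) (ht : ν t ≠ ⊤) :
    IsClosed {z | f z ⁻¹' t ≤ᵐ[μ] s} := by
  rw [← isOpen_compl_iff, isOpen_iff_mem_nhds]
  intro z hz
  have hpos : 0 < μ (f z ⁻¹' t \ s) := pos_iff_ne_zero.2 (mt ae_le_set.2 hz)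
  filter_upwards [(tendsto_measure_symmDiff_preimage_nhds_zero (hf.tendsto z)
    (.of_forall hfm) (hfm z) htm ht).eventually_lt_const hpos] with w hw hws
  refine hw.not_ge ?_
  calc μ (f z ⁻¹' t \ s)
      ≤ μ (f z ⁻¹' t \ f w ⁻¹' t) + μ (f w ⁻¹' t \ s) :=
        (measure_mono (sdiff_triangle _ _ _)).trans (measure_union_le _ _)
    _ = μ (f z ⁻¹' t \ f w ⁻¹' t) := by rw [ae_le_set.1 hws, add_zero]
    _ ≤ μ ((f w ⁻¹' t) ∆ (f z ⁻¹' t)) := measure_mono subset_union_right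

theorem isClosed_setOfPred_preimage_ae_le [SigmaFinite ν] {f : Z → C(X, Y)} (hf : Continuous f)
    (hfm : ∀ z, MeasurePreserving (f z) μ ν) (s : Set X) {t : Set Y}
    (htm : NullMeasurableSet t ν) :
    IsClosed {z | f z ⁻¹' t ≤ᵐ[μ] s} := by
  have hcover (z : Z) : f z ⁻¹' t = ⋃ n, f z ⁻¹' (t ∩ spanningSets ν n) := by
    rw [← preimage_iUnion, ← inter_iUnion, iUnion_spanningSets, inter_univ]
  have hiff (z : Z) : f z ⁻¹' t ≤ᵐ[μ] s ↔ ∀ n, f z ⁻¹' (t ∩ spanningSets ν n) ≤ᵐ[μ] s := by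
    simp only [ae_le_set, hcover z, iUnion_sdiff, measure_iUnion_null_iff]
  simp only [hiff, ofPred_forall]
  exact isClosed_iInter fun n => isClosed_setOfPred_preimage_ae_le_of_ne_top hf hfm s
    (htm.inter (measurableSet_spanningSets ν n).nullMeasurableSet)
    (measure_ne_top_of_subset inter_subset_right (measure_spanningSets_lt_top ν n).ne)

theorem ergodicVAdd_of_denseRange_vadd_zero {Γ M : Type*} [AddMonoid M] [TopologicalSpace M]
    [AddAction M X] [ContinuousVAdd M X] [VAdd Γ M] [VAdd Γ X] [VAddAssocClass Γ M X]
    [IsLocallyFiniteMeasure μ] [SigmaFinite μ] [ErgodicVAdd M X μ]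
    (hΓ : DenseRange fun g : Γ => g +ᵥ (0 : M)) : ErgodicVAdd Γ X μ where
  measure_preimage_vadd g s hs := by
    simpa only [vadd_zero_vadd] using
      VAddInvariantMeasure.measure_preimage_vadd (μ := μ) (g +ᵥ (0 : M)) hs
  aeconst_of_forall_preimage_vadd_ae_eq {s} hs hinv := by
    let f : C(M × X, X) := ⟨fun p => p.1 +ᵥ p.2, continuous_vadd⟩
    have hle {t : Set X} (ht : MeasurableSet t) (htΓ : ∀ g : Γ, (g +ᵥ ·) ⁻¹' t ≤ᵐ[μ] t) (m : M) :
        (m +ᵥ ·) ⁻¹' t ≤ᵐ[μ] t := by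
      have hclosed : IsClosed {m : M | f.curry m ⁻¹' t ≤ᵐ[μ] t} :=
        isClosed_setOfPred_preimage_ae_le f.curry.continuous (measurePreserving_vadd · μ) t
          ht.nullMeasurableSet
      refine hΓ.induction_on m hclosed fun g => ?_
      simpa [f, Function.comp_def] using htΓ g
    refine aeconst_of_forall_preimage_vadd_ae_eq M hs.nullMeasurableSet fun m => ?_
    refine (hle hs (fun g => (hinv g).le) m).antisymm ?_
    simpa using (hle hs.compl (fun g => (hinv g).compl.le) m).compl

end DenseSubaction

theorem stmt_0_general (Γ : Type*) {X : Type*} [AddGroup Γ] [Countable Γ] [MeasurableSpace X]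
    [AddAction Γ X] [MeasurableConstVAdd Γ X] {μ : Measure X} [SFinite μ] [ErgodicVAdd Γ X μ]
    {N : Set X} (hpos : μ N ≠ 0) (hN : CardLTBounding N) (Φ : X → ℕ → ℕ)
    {E : Set X} (hE : MeasurableSet E) {c : ENNReal} (hc : c < μ E) :
    ∃ A ⊆ E, c < μ A ∧ BddNatFun (Φ '' A) := by
  let M : Set X := ⋃ g : Γ, (g +ᵥ ·) '' N
  have hM_inv (g : Γ) : MapsTo (g +ᵥ ·) M M := fun y hy => by
    obtain ⟨k, x, hx, rfl⟩ := mem_iUnion.1 hy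
    exact mem_iUnion.2 ⟨g + k, x, hx, add_vadd g k x⟩
  have hNM : N ⊆ M := fun x hx => mem_iUnion.2 ⟨0, x, hx, zero_vadd Γ x⟩
  have hM_full : μ (M ∩ E) = μ E :=
    measure_inter_eq_of_forall_mapsTo_vadd Γ hM_inv (measure_pos_of_superset hNM hpos).ne' hE
  obtain ⟨h, hh⟩ := CardLTBounding.iUnion (fun g : Γ => hN.image (g +ᵥ ·)) Φ
  obtain ⟨A, hA, hcA, hbdd⟩ :=
    exists_subset_lt_measure_bddNatFun_image (hM_full ▸ hc) fun x hx => hh x hx.1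
  exact ⟨A, hA.trans inter_subset_right, hcA, hbdd⟩

/-- The rationals as a subgroup of `ℝ`, so that they act on `ℝ` by translations. -/
noncomputable abbrev ratAddSubgroup : AddSubgroup ℝ := (Rat.castHom ℝ : ℚ →+ ℝ).range

instance countable_ratAddSubgroup : Countable ratAddSubgroup :=
  (Rat.castHom ℝ : ℚ →+ ℝ).rangeRestrict_surjective.countable

instance ergodicVAdd_ratAddSubgroup : ErgodicVAdd ratAddSubgroup ℝ volume :=
  ergodicVAdd_of_denseRange_vadd_zero (M := ℝ) <| by
    simpa [DenseRange, AddSubgroup.vadd_def, range] using Rat.denseRange_cast (𝕜 := ℝ)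

theorem stmt_0
    (hyp : ∃ N : Set ℝ, N ⊆ Set.Icc 0 1 ∧ 0 < volume N ∧
      ∀ g : ℝ → ℕ → ℕ, ∃ h : ℕ → ℕ, ∀ x ∈ N, ∀ᶠ n in atTop, g x n ≤ h n)
    (Φ : ℝ → ℕ → ℕ) (ε : ℝ) (hε : 0 < ε) :
    ∃ A ⊆ Set.Icc (0 : ℝ) 1, ENNReal.ofReal (1 - ε) ≤ volume A ∧
      BddNatFun (Φ '' A) := by
  obtain ⟨N, -, hpos, hN⟩ := hyp
  have hlt : ENNReal.ofReal (1 - ε) < volume (Icc (0 : ℝ) 1) := by simp [hε]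
  obtain ⟨A, hA, hεA, hbdd⟩ := stmt_0_general ratAddSubgroup hpos.ne' hN Φ measurableSet_Icc hlt
  exact ⟨A, hA, hεA.le, hbdd⟩
end

section
/- Assume that every subset of ℝ of cardinality less than the continuum is Lebesgue-null (i.e. non(N) = 𝔠), and that there exists a set Z ⊆ ℕ^ℕ of cardinality continuum such that every meagre subset of Z has cardinality less than the continuum (a 𝔠-Lusin set). Let 𝒮 be a set of sequences F = ⟨f_n⟩_{n∈ℕ} of functions f_n : [0,1] → [0,1], let P be a predicate assigning to each F ∈ 𝒮 and each A ⊆ [0,1] a proposition P(F,A), and let o : 𝒮 → ([0,1] → ℕ^ℕ) be a function which is cofinal (for every φ : [0,1] → ℕ^ℕ there exists F ∈ 𝒮 with φ(x)(n) ≤ o(F)(x)(n) for all x ∈ [0,1] and n ∈ ℕ) and such that for every F ∈ 𝒮 and A ⊆ [0,1], if P(F,A) holds then {o(F)(x) : x ∈ A} is bounded in ℕ^ℕ. Then there exist F ∈ 𝒮 and ε > 0 such that for every A ⊆ [0,1] with m*(A) ≥ 1 − ε, P(F,A) fails. -/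
open MeasureTheory Filter Set

/-!
Bounded subsets of Baire space are meagre, so a Lusin set meets them in few points. Embed the domain
into a Lusin set and choose, by cofinality, an `F` whose `o F` dominates this embedding. If `P F A`
holds, the embedding maps `A` onto a bounded subset of the Lusin set, so `A` has cardinality less
than the continuum and is therefore null.
-/

open scoped Cardinal

universe u

section Product

variable {J : Type*} {α : J → Type*} [∀ j, TopologicalSpace (α j)]

theorem interior_univ_pi_eq_empty {s : ∀ j, Set (α j)} (hs : {j | s j ≠ univ}.Infinite) :
    interior (univ.pi s) = ∅ := by
  classical
  refine eq_empty_of_forall_notMem fun f hf => ?_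
  rw [mem_interior_iff_mem_nhds, nhds_pi, Filter.mem_pi] at hf
  obtain ⟨K, hK, t, ht, htK⟩ := hf
  obtain ⟨j, hj, hjK⟩ := hs.exists_notMem_finite hK
  obtain ⟨y, hy⟩ := (ne_univ_iff_exists_notMem _).1 hj
  have hmem : Function.update f j y ∈ K.pi t := fun k hk => by
    rw [Function.update_of_ne (ne_of_mem_of_not_mem hk hjK)]
    exact mem_of_mem_nhds (ht k)
  exact hy (by simpa only [Function.update_self] using htK hmem j (mem_univ j))

theorem isNowhereDense_univ_pi {s : ∀ j, Set (α j)} (hs : {j | ¬ Dense (s j)}.Infinite) :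
    IsNowhereDense (univ.pi s) := by
  rw [IsNowhereDense, closure_pi_set]
  exact interior_univ_pi_eq_empty (by simpa only [dense_iff_closure_eq] using hs)

theorem isNowhereDense_Iic_pi [Infinite J] [∀ j, Preorder (α j)] [∀ j, ClosedIicTopology (α j)]
    [∀ j, NoMaxOrder (α j)] (b : ∀ j, α j) : IsNowhereDense (Iic b) := by
  rw [← pi_univ_Iic]
  refine isNowhereDense_univ_pi (infinite_univ.mono fun j _ hdense => ?_)
  obtain ⟨c, hc⟩ := exists_gt (b j)
  exact hc.not_ge (isClosed_Iic.closure_subset (hdense c))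

end Product

theorem bddNatFun_iff_bddAbove {S : Set (ℕ → ℕ)} : BddNatFun S ↔ BddAbove S :=
  Iff.rfl

theorem bddAbove_image_of_forall_le {X E : Type*} [Preorder E] {f g : X → E} {A : Set X}
    (hg : BddAbove (g '' A)) (hfg : ∀ x ∈ A, f x ≤ g x) : BddAbove (f '' A) := by
  obtain ⟨b, hb⟩ := hg
  exact ⟨b, forall_mem_image.2 fun x hx => (hfg x hx).trans (hb (mem_image_of_mem g hx))⟩

/-- A `κ`-Lusin set: a set of cardinality `κ` whose meagre subsets all have cardinality less
than `κ`. -/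
def IsLusinSet {E : Type u} [TopologicalSpace E] (κ : Cardinal.{u}) (Z : Set E) : Prop :=
  #Z = κ ∧ ∀ M ⊆ Z, IsMeagre M → #M < κ

theorem IsLusinSet.mk_lt_of_isMeagre_image {X E : Type u} [TopologicalSpace E] {κ : Cardinal.{u}}
    {Z : Set E} (hZ : IsLusinSet κ Z) (e : X ↪ Z) {A : Set X}
    (hA : IsMeagre ((fun x => (e x : E)) '' A)) : #A < κ := by
  rw [← Cardinal.mk_image_eq (Subtype.val_injective.comp e.injective)]
  exact hZ.2 _ (image_subset_iff.2 fun x _ => (e x).2) hA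

theorem stmt_4_general {ι : Type*} {X E : Type u} [TopologicalSpace E] [Preorder E]
    (hIic : ∀ b : E, IsMeagre (Iic b)) {κ : Cardinal.{u}} (hX : #X ≤ κ)
    (hLusin : ∃ Z : Set E, IsLusinSet κ Z) (I : Set X) (𝒮 : Set ι) (P : ι → Set X → Prop)
    (o : ι → X → E) (hcof : ∀ φ : X → E, ∃ F ∈ 𝒮, ∀ x ∈ I, φ x ≤ o F x)
    (ho : ∀ F ∈ 𝒮, ∀ A ⊆ I, P F A → BddAbove (o F '' A)) :
    ∃ F ∈ 𝒮, ∀ A ⊆ I, P F A → #A < κ := by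
  obtain ⟨Z, hZ⟩ := hLusin
  obtain ⟨e⟩ : Nonempty (X ↪ Z) := hX.trans_eq hZ.1.symm
  obtain ⟨F, hF, hle⟩ := hcof fun x => e x
  refine ⟨F, hF, fun A hA hP => hZ.mk_lt_of_isMeagre_image e ?_⟩
  obtain ⟨b, hb⟩ := bddAbove_image_of_forall_le (ho F hF A hA hP) fun x hx => hle x (hA hx)
  exact (hIic b).mono hb

theorem stmt_4
    (hnon : ∀ s : Set ℝ, Cardinal.mk s < Cardinal.continuum → volume s = 0)
    (hLusin : ∃ Z : Set (ℕ → ℕ), Cardinal.mk Z = Cardinal.continuum ∧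
      ∀ M ⊆ Z, IsMeagre M → Cardinal.mk M < Cardinal.continuum)
    (𝒮 : Set (ℕ → ℝ → ℝ))
    (h𝒮 : ∀ F ∈ 𝒮, ∀ n : ℕ, ∀ x ∈ Set.Icc (0 : ℝ) 1, F n x ∈ Set.Icc (0 : ℝ) 1)
    (P : (ℕ → ℝ → ℝ) → Set ℝ → Prop)
    (o : (ℕ → ℝ → ℝ) → ℝ → ℕ → ℕ)
    (hcof : ∀ φ : ℝ → ℕ → ℕ, ∃ F ∈ 𝒮, ∀ x ∈ Set.Icc (0 : ℝ) 1, ∀ n, φ x n ≤ o F x n)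
    (ho : ∀ F ∈ 𝒮, ∀ A ⊆ Set.Icc (0 : ℝ) 1, P F A → BddNatFun (o F '' A)) :
    ∃ F ∈ 𝒮, ∃ ε : ℝ, 0 < ε ∧
      ∀ A ⊆ Set.Icc (0 : ℝ) 1, ENNReal.ofReal (1 - ε) ≤ volume A → ¬ P F A := by
  obtain ⟨F, hF, hsmall⟩ := stmt_4_general (fun b => (isNowhereDense_Iic_pi b).isMeagre)
    Cardinal.mk_real.le hLusin _ 𝒮 P o hcof (by simpa only [bddNatFun_iff_bddAbove] using ho)
  exact ⟨F, hF, 1 / 2, by norm_num, fun A hA hvol hP => by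
    norm_num [hnon A (hsmall A hA hP)] at hvol⟩
end

section
/- Assume that every subset of ℝ of cardinality less than the continuum is Lebesgue-null (i.e. non(N) = 𝔠), and that there exists a set Z ⊆ ℕ^ℕ of cardinality continuum such that every meagre subset of Z has cardinality less than the continuum (a 𝔠-Lusin set). Then there exist a sequence of functions f_n : [0,1] → [0,1] with f_n(x) → 0 for every x ∈ [0,1], and ε > 0, such that for every A ⊆ [0,1] with m*(A) ≥ 1 − ε, the sequence f_n does not converge to 0 uniformly on A. -/
open MeasureTheory Filter Set

/-!
Truncating the values of `z : ℕ → ℕ` at height `n` gives sequences that converge to `z` in Baire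
space as `n → ∞`, and on a family of points this convergence is uniform only if the family is
bounded pointwise by a single `b : ℕ → ℕ`. Bounded families are nowhere dense, so an injection
of `ℝ` into a `𝔠`-Lusin set pulls them back to sets of cardinality less than `𝔠`, which are null.
The distances from the points to their truncations thus tend to zero, but not uniformly on any set
of positive outer measure.
-/

theorem isNowhereDense_Iic_pi_s6 {ι : Type*} [Infinite ι] {X : ι → Type*} [∀ i, Preorder (X i)]
    [∀ i, NoMaxOrder (X i)] [∀ i, TopologicalSpace (X i)] [∀ i, ClosedIicTopology (X i)]
    (b : ∀ i, X i) : IsNowhereDense (Iic b) := by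
  classical
  have hclosed : IsClosed (Iic b) := by
    rw [← pi_univ_Iic]
    exact isClosed_set_pi fun _ _ => isClosed_Iic
  rw [hclosed.isNowhereDense_iff, eq_empty_iff_forall_notMem]
  intro z hz
  choose c hc using fun i => exists_gt (b i)
  -- Raising `z` above `b` at one coordinate takes it out of `Iic b`, and only finitely many
  -- coordinates matter for a neighbourhood of `z`.
  have hlim : Tendsto (fun i => Function.update z i (c i)) cofinite (nhds z) := by
    refine tendsto_pi_nhds.2 fun k => tendsto_const_nhds.congr' ?_
    filter_upwards [(finite_singleton k).compl_mem_cofinite] with i hi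
    rw [Function.update_of_ne (Ne.symm hi)]
  obtain ⟨i, hi⟩ := (hlim.eventually (mem_interior_iff_mem_nhds.1 hz)).exists
  have hle : c i ≤ b i := by simpa only [Function.update_self] using hi i
  exact (hc i).not_ge hle

theorem exists_mk_preimage_lt_of_isMeagre.{u} {α X : Type u} [TopologicalSpace X] {Z : Set X}
    {κ : Cardinal} (hαZ : Cardinal.mk α ≤ Cardinal.mk Z)
    (hZ : ∀ M ⊆ Z, IsMeagre M → Cardinal.mk M < κ) :
    ∃ e : α → X, ∀ M, IsMeagre M → Cardinal.mk (e ⁻¹' M) < κ := by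
  obtain ⟨e⟩ := hαZ
  have hinj : Function.Injective fun x => (e x : X) := Subtype.val_injective.comp e.injective
  refine ⟨fun x => e x, fun M hM => ?_⟩
  rw [← Cardinal.mk_image_eq hinj]
  exact hZ _ (image_subset_iff.2 fun x _ => (e x).2) (hM.mono (image_preimage_subset _ _))

theorem tendstoUniformlyOn_zero_iff_of_nonneg {α : Type*} {f : ℕ → α → ℝ}
    (hf : ∀ n x, 0 ≤ f n x) {A : Set α} :
    TendstoUniformlyOn f 0 atTop A ↔ ∀ δ > 0, ∃ N, ∀ n ≥ N, ∀ x ∈ A, f n x < δ := by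
  simp only [Metric.tendstoUniformlyOn_iff, eventually_atTop, Pi.zero_apply, dist_zero_left,
    Real.norm_of_nonneg (hf _ _)]

section TruncationDist

attribute [local instance] PiNat.metricSpaceNatNat

/-- The distance in Baire space from `z` to its truncation `k ↦ min (z k) n` at height `n`. The
metric is `PiNat.metricSpaceNatNat`: points that first differ at coordinate `k` have distance
`(1 / 2) ^ k`. Precomposed with a map into Baire space, these functions are the sequence for which
Egorov's conclusion fails. -/
noncomputable def truncationDist (n : ℕ) (z : ℕ → ℕ) : ℝ :=
  dist z (z ⊓ Function.const ℕ n)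

theorem truncationDist_mem_Icc (n : ℕ) (z : ℕ → ℕ) : truncationDist n z ∈ Icc 0 1 :=
  ⟨dist_nonneg, PiNat.dist_le_one _ _⟩

theorem tendsto_truncationDist (z : ℕ → ℕ) :
    Tendsto (fun n => truncationDist n z) atTop (nhds 0) := by
  have htrunc : Tendsto (fun n => z ⊓ Function.const ℕ n) atTop (nhds z) := by
    refine tendsto_pi_nhds.2 fun k => tendsto_const_nhds.congr' ?_
    filter_upwards [eventually_ge_atTop (z k)] with n hn
    exact (inf_eq_left.2 hn).symm
  simpa only [truncationDist, dist_self] using (tendsto_const_nhds (x := z)).dist htrunc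

theorem le_of_truncationDist_lt {n k : ℕ} {z : ℕ → ℕ} (h : truncationDist n z < (1 / 2) ^ k) :
    z k ≤ n :=
  inf_eq_left.1 (PiNat.apply_eq_of_dist_lt h le_rfl).symm

end TruncationDist

theorem bddAbove_image_of_tendstoUniformlyOn_truncationDist {α : Type*} {e : α → ℕ → ℕ} {A : Set α}
    (h : TendstoUniformlyOn (fun n x => truncationDist n (e x)) 0 atTop A) :
    BddAbove (e '' A) := by
  rw [tendstoUniformlyOn_zero_iff_of_nonneg fun n x => (truncationDist_mem_Icc n (e x)).1] at h
  choose b hb using fun k : ℕ => h ((1 / 2) ^ k) (by positivity)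
  exact ⟨b, forall_mem_image.2 fun x hx k => le_of_truncationDist_lt (hb k _ le_rfl x hx)⟩

theorem stmt_6_general {α : Type*} [MeasurableSpace α] {μ : Measure α} {e : α → ℕ → ℕ}
    (he : ∀ b, μ (e ⁻¹' Iic b) = 0) :
    ∃ f : ℕ → α → ℝ, (∀ n x, f n x ∈ Icc 0 1) ∧ (∀ x, Tendsto (fun n => f n x) atTop (nhds 0)) ∧
      ∀ A, μ A ≠ 0 → ¬ TendstoUniformlyOn f 0 atTop A := by
  refine ⟨fun n x => truncationDist n (e x), fun n x => truncationDist_mem_Icc n (e x),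
    fun x => tendsto_truncationDist (e x), fun A hA hunif => hA ?_⟩
  obtain ⟨b, hb⟩ := bddAbove_image_of_tendstoUniformlyOn_truncationDist hunif
  exact measure_mono_null (fun x hx => hb (mem_image_of_mem e hx)) (he b)

theorem stmt_6
    (hnon : ∀ s : Set ℝ, Cardinal.mk s < Cardinal.continuum → volume s = 0)
    (hLusin : ∃ Z : Set (ℕ → ℕ), Cardinal.mk Z = Cardinal.continuum ∧
      ∀ M ⊆ Z, IsMeagre M → Cardinal.mk M < Cardinal.continuum) :
    ∃ f : ℕ → ℝ → ℝ,
      (∀ n : ℕ, ∀ x ∈ Set.Icc (0 : ℝ) 1, f n x ∈ Set.Icc (0 : ℝ) 1) ∧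
      (∀ x ∈ Set.Icc (0 : ℝ) 1, Tendsto (fun n => f n x) atTop (nhds 0)) ∧
      ∃ ε : ℝ, 0 < ε ∧
        ∀ A ⊆ Set.Icc (0 : ℝ) 1, ENNReal.ofReal (1 - ε) ≤ volume A →
          ¬ (∀ δ : ℝ, 0 < δ → ∃ N : ℕ, ∀ n ≥ N, ∀ x ∈ A, f n x < δ) := by
  obtain ⟨Z, hZ, hmeagre⟩ := hLusin
  obtain ⟨e, he⟩ := exists_mk_preimage_lt_of_isMeagre (Cardinal.mk_real.trans hZ.symm).le hmeagre
  obtain ⟨f, hf01, hf0, hf⟩ := stmt_6_general (μ := volume) (e := e) fun b =>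
    hnon _ (he _ (isNowhereDense_Iic_pi_s6 b).isMeagre)
  refine ⟨f, fun n x _ => hf01 n x, fun x _ => hf0 x, 1 / 2, by norm_num, fun A _ hA hunif => ?_⟩
  have hApos : 0 < volume A := (ENNReal.ofReal_pos.2 (by norm_num)).trans_le hA
  exact hf A hApos.ne' <|
    (tendstoUniformlyOn_zero_iff_of_nonneg fun n x => (hf01 n x).1).2 hunif
end

section
/- Let φ be a lower semicontinuous submeasure on ℕ and let (ε_n) be a strictly decreasing sequence of positive reals with ε_n → 0, ε_0 ≤ 1, and 2ε_0 ≤ lim_{n→∞} φ(ℕ \ [0,n)). Then for every function Ψ : [0,1] → ℕ^ℕ there exists a sequence F = ⟨f_m⟩_{m∈ℕ} of functions f_m : [0,1] → [0,1] converging to 0 I-pointwise on [0,1] (where I = Exh(φ)) such that o_φ(F)(x)(n) ≥ Ψ(x)(n) for every x ∈ [0,1] and every n ∈ ℕ, where o_φ(F)(x)(n) = min{ k ∈ ℕ : φ({m : f_m(x) ≥ ε_n} \ [0,k)) < ε_n }. -/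
open MeasureTheory Filter Set ENNReal

/-- A lower semicontinuous submeasure on `ℕ`. -/
def IsLSCSubmeasure (φ : Set ℕ → ℝ≥0∞) : Prop :=
  φ ∅ = 0 ∧ (∀ A B : Set ℕ, φ A ≤ φ (A ∪ B)) ∧
    (∀ A B : Set ℕ, φ (A ∪ B) ≤ φ A + φ B) ∧
    ∀ A : Set ℕ, Tendsto (fun n => φ (A ∩ Set.Iio n)) atTop (nhds (φ A))

/-- `f` converges to `0` `Exh(φ)`-pointwise on `A`. -/
def ExhPointwise (φ : Set ℕ → ℝ≥0∞) (f : ℕ → ℝ → ℝ) (A : Set ℝ) : Prop :=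
  ∀ δ : ℝ, 0 < δ → ∀ x ∈ A,
    ∃ k : ℕ, φ ({m | δ ≤ f m x} \ Set.Iio k) < ENNReal.ofReal δ

/-- `f` converges to `0` equi-ideally (w.r.t. `φ`) on `A`. -/
def ExhEqui (φ : Set ℕ → ℝ≥0∞) (f : ℕ → ℝ → ℝ) (A : Set ℝ) : Prop :=
  ∀ δ : ℝ, 0 < δ →
    ∃ k : ℕ, ∀ x ∈ A, φ ({m | δ ≤ f m x} \ Set.Iio k) < ENNReal.ofReal δ

/-! Given `ψ : ℕ → ℕ`, choose finite sets `[ψ n, b n)` of `φ`-measure more than `ε n`; lower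
semicontinuity makes this possible, since the tails of `ℕ` are large. A single sequence tending to
`0` in the ordinary sense can stay above `ε n` on all of `[0, b n)` for every `n`: it only has to
decrease slowly enough. Its `n`-th level set cut below any `k < ψ n` then contains `[ψ n, b n)`. -/

theorem IsLSCSubmeasure.monotone {φ : Set ℕ → ℝ≥0∞} (hφ : IsLSCSubmeasure φ) : Monotone φ :=
  fun A B hAB => by simpa only [union_eq_self_of_subset_left hAB] using hφ.2.1 A B

theorem exhPointwise_of_tendsto {φ : Set ℕ → ℝ≥0∞} (hφ : φ ∅ = 0) {f : ℕ → ℝ → ℝ} {A : Set ℝ}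
    (hf : ∀ x ∈ A, Tendsto (fun m => f m x) atTop (nhds 0)) : ExhPointwise φ f A := by
  intro δ hδ x hx
  obtain ⟨k, hk⟩ := eventually_atTop.1 ((hf x hx).eventually_lt_const hδ)
  have hempty : {m | δ ≤ f m x} \ Iio k = ∅ :=
    sdiff_eq_empty.2 fun m hm => not_le.1 fun hkm => (hk m hkm).not_ge hm
  exact ⟨k, by rwa [hempty, hφ, ofReal_pos]⟩

theorem exists_tendsto_atTop_forall_lt_imp_le (b : ℕ → ℕ) :
    ∃ σ : ℕ → ℕ, Tendsto σ atTop atTop ∧ ∀ n, ∀ m < b n, σ m ≤ n := by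
  classical
  -- The second alternative makes the search terminate when `b` is bounded.
  have hex : ∀ m, ∃ n, m < b n ∨ m ≤ n := fun m => ⟨m, .inr le_rfl⟩
  refine ⟨fun m => Nat.find (hex m), tendsto_atTop.2 fun p => ?_,
    fun n m hm => Nat.find_min' (hex m) (.inl hm)⟩
  have hlarge : ∀ᶠ m in atTop, ∀ n ∈ Iio p, b n ≤ m ∧ n < m :=
    (finite_Iio p).eventually_all.2 fun n _ =>
      (eventually_ge_atTop (b n)).and (eventually_gt_atTop n)
  filter_upwards [hlarge] with m hm
  refine (Nat.le_find_iff (hex m) p).2 fun n hn => ?_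
  exact not_or.2 ⟨(hm n hn).1.not_gt, (hm n hn).2.not_ge⟩

theorem stmt_9_general {X : Type*} {φ : Set ℕ → ℝ≥0∞} (hmono : Monotone φ)
    (hlsc : ∀ A : Set ℕ, Tendsto (fun n => φ (A ∩ Iio n)) atTop (nhds (φ A)))
    {ε : ℕ → ℝ} (hε : Antitone ε) (hεlim : Tendsto ε atTop (nhds 0))
    (hbig : ∀ k, ENNReal.ofReal (ε 0) < φ (Iio k)ᶜ) (Ψ : X → ℕ → ℕ) :
    ∃ f : ℕ → X → ℝ, (∀ m x, f m x ∈ Icc 0 (ε 0)) ∧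
      (∀ x, Tendsto (fun m => f m x) atTop (nhds 0)) ∧
      ∀ x n, Ψ x n ∈
        lowerBounds {k | φ ({m | ε n ≤ f m x} \ Iio k) < ENNReal.ofReal (ε n)} := by
  have hblock : ∀ x n, ∃ N, ENNReal.ofReal (ε n) < φ ((Iio (Ψ x n))ᶜ ∩ Iio N) := fun x n =>
    have htail : ENNReal.ofReal (ε n) < φ (Iio (Ψ x n))ᶜ :=
      (ofReal_le_ofReal (hε n.zero_le)).trans_lt (hbig (Ψ x n))
    ((hlsc _).eventually_const_lt htail).exists
  choose b hb using hblock
  choose σ hσ hσb using fun x => exists_tendsto_atTop_forall_lt_imp_le (b x)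
  refine ⟨fun m x => ε (σ x m),
    fun m x => ⟨hε.le_of_tendsto hεlim (σ x m), hε (σ x m).zero_le⟩,
    fun x => hεlim.comp (hσ x), fun x n k hk => ?_⟩
  by_contra! hkΨ
  have hsub : (Iio (Ψ x n))ᶜ ∩ Iio (b x n) ⊆ {m | ε n ≤ ε (σ x m)} \ Iio k :=
    fun m ⟨hΨm, hmb⟩ => ⟨hε (hσb x n m hmb), fun hmk => hΨm (lt_trans hmk hkΨ)⟩
  exact lt_asymm hk ((hb x n).trans_le (hmono hsub))

theorem stmt_9 (φ : Set ℕ → ℝ≥0∞) (hφ : IsLSCSubmeasure φ)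
    (ε : ℕ → ℝ) (hεanti : StrictAnti ε) (hεpos : ∀ n, 0 < ε n)
    (hεlim : Tendsto ε atTop (nhds 0)) (hε0 : ε 0 ≤ 1)
    (hbig : ENNReal.ofReal (2 * ε 0) ≤ ⨅ n : ℕ, φ (Set.Iio n)ᶜ) :
    ∀ Ψ : ℝ → ℕ → ℕ, ∃ f : ℕ → ℝ → ℝ,
      (∀ m : ℕ, ∀ x ∈ Set.Icc (0 : ℝ) 1, f m x ∈ Set.Icc (0 : ℝ) 1) ∧
      ExhPointwise φ f (Set.Icc 0 1) ∧
      ∀ o : ℝ → ℕ → ℕ,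
        (∀ x ∈ Set.Icc (0 : ℝ) 1, ∀ n : ℕ,
          IsLeast {k : ℕ | φ ({m | ε n ≤ f m x} \ Set.Iio k) < ENNReal.ofReal (ε n)}
            (o x n)) →
        ∀ x ∈ Set.Icc (0 : ℝ) 1, ∀ n : ℕ, Ψ x n ≤ o x n := by
  intro Ψ
  have htail : ∀ k, ENNReal.ofReal (ε 0) < φ (Iio k)ᶜ := fun k =>
    calc ENNReal.ofReal (ε 0)
      _ < ENNReal.ofReal (2 * ε 0) := by
          rw [ofReal_lt_ofReal_iff] <;> linarith [hεpos 0]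
      _ ≤ φ (Iio k)ᶜ := hbig.trans (iInf_le _ k)
  obtain ⟨f, hfε, hf0, hfΨ⟩ :=
    stmt_9_general hφ.monotone hφ.2.2.2 hεanti.antitone hεlim htail Ψ
  exact ⟨f, fun m x _ => Icc_subset_Icc_right hε0 (hfε m x),
    exhPointwise_of_tendsto hφ.1 fun x _ => hf0 x, fun o ho x hx n => hfΨ x n (ho x hx n).1⟩
end

section
/- Let C : ℕ → 𝒫(ℕ) be a nondecreasing sequence of subsets of ℕ (C_i ⊆ C_{i+1} for all i), generating the countably generated ideal I = {A ⊆ ℕ : A ⊆ C_k for some k}. Let f_n : [0,1] → [0,1] (n ∈ ℕ) be Lebesgue-measurable functions converging to 0 I-pointwise on [0,1], and let ε > 0. Then there exists a Lebesgue-measurable set B ⊆ [0,1] with m(B) ≤ ε such that f_n converges to 0 I-uniformly on [0,1] \ B. -/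
open MeasureTheory Filter Set

/-- `f` converges to `0` `I`-pointwise on `A`, where `I` is the ideal
generated by the nondecreasing sequence `C`. -/
def CgPointwise (C : ℕ → Set ℕ) (f : ℕ → ℝ → ℝ) (A : Set ℝ) : Prop :=
  ∀ δ : ℝ, 0 < δ → ∀ x ∈ A, ∃ k : ℕ, {n | δ ≤ f n x} ⊆ C k

/-- `f` converges to `0` `I`-uniformly on `A`, where `I` is the ideal
generated by the nondecreasing sequence `C`. -/
def CgUniform (C : ℕ → Set ℕ) (f : ℕ → ℝ → ℝ) (A : Set ℝ) : Prop :=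
  ∀ δ : ℝ, 0 < δ → ∃ k : ℕ, ∀ x ∈ A, {n | δ ≤ f n x} ⊆ C k

/-! Fix `δ > 0`. The points at which some index outside `C k` has value at least `δ` form sets that
decrease in `k` and, by `I`-pointwise convergence, have null intersection, so on a set of finite
measure their measures tend to `0`. Doing this for each `δ = 1 / (j + 1)` and discarding a set of
measure at most `η j`, with `∑ η j < ε`, leaves a set on which the index `k` depends only on `δ`. -/

open scoped Topology

section Egorov

variable {α ι κ : Type*}

/-- The set of points `x` where `{n | δ ≤ f n x}` is not contained in the `k`-th generator `C k`.
It is the part of the domain on which `k` fails to witness convergence at level `δ`. -/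
def exceptionalSet (C : κ → Set ι) (f : ι → α → ℝ) (δ : ℝ) (k : κ) : Set α :=
  {x | ¬ {n | δ ≤ f n x} ⊆ C k}

variable {C : κ → Set ι} {f : ι → α → ℝ} {δ : ℝ}

theorem antitone_exceptionalSet [Preorder κ] (hC : Monotone C) :
    Antitone (exceptionalSet C f δ) :=
  fun _ _ hkl _ hx h => hx (h.trans (hC hkl))

variable [MeasurableSpace α] [Countable ι]

theorem measurableSet_exceptionalSet (hf : ∀ n, Measurable (f n)) (k : κ) :
    MeasurableSet (exceptionalSet C f δ k) := by
  have h_union : exceptionalSet C f δ k = ⋃ n ∈ (C k)ᶜ, {x | δ ≤ f n x} := by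
    ext x
    simp [exceptionalSet, not_subset, and_comm]
  rw [h_union]
  exact .biUnion (to_countable _) fun n _ => measurableSet_le measurable_const (hf n)

variable {μ : Measure α}

theorem exists_measure_iUnion_le_of_tendsto_zero {l : Filter κ} [l.NeBot]
    {E : ι → κ → Set α} (hE : ∀ i, Tendsto (fun k => μ (E i k)) l (𝓝 0))
    {ε : ENNReal} (hε : ε ≠ 0) : ∃ k : ι → κ, μ (⋃ i, E i (k i)) ≤ ε := by
  obtain ⟨η, hη, hsum⟩ := ENNReal.exists_pos_sum_of_countable' hε ι
  choose k hk using fun i => ((hE i).eventually_lt_const (hη i)).exists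
  refine ⟨k, ?_⟩
  calc μ (⋃ i, E i (k i)) ≤ ∑' i, μ (E i (k i)) := measure_iUnion_le _
    _ ≤ ∑' i, η i := ENNReal.tsum_le_tsum fun i => (hk i).le
    _ ≤ ε := hsum.le

variable {s : Set α} [Preorder κ] [Nonempty κ] [(atTop : Filter κ).IsCountablyGenerated]

theorem tendsto_measure_inter_exceptionalSet (hC : Monotone C) (hf : ∀ n, Measurable (f n))
    (hs : MeasurableSet s) (hμs : μ s ≠ ⊤)
    (hconv : ∀ᵐ x ∂μ, x ∈ s → ∃ k, {n | δ ≤ f n x} ⊆ C k) :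
    Tendsto (fun k => μ (s ∩ exceptionalSet C f δ k)) atTop (𝓝 0) := by
  have h_null : μ (⋂ k, s ∩ exceptionalSet C f δ k) = 0 := by
    rw [← inter_iInter, measure_eq_zero_iff_ae_notMem]
    filter_upwards [hconv] with x h_witness hx
    obtain ⟨k, hk⟩ := h_witness hx.1
    exact mem_iInter.1 hx.2 k hk
  rw [← h_null]
  exact tendsto_measure_iInter_atTop
    (fun k => (hs.inter (measurableSet_exceptionalSet hf k)).nullMeasurableSet)
    (fun _ _ hkl => inter_subset_inter_right s (antitone_exceptionalSet hC hkl))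
    ⟨Classical.arbitrary κ, measure_ne_top_of_subset inter_subset_left hμs⟩

theorem stmt_11_general [IsDirectedOrder κ] (hC : Monotone C) (hf : ∀ n, Measurable (f n))
    (hs : MeasurableSet s) (hμs : μ s ≠ ⊤)
    (hconv : ∀ᵐ x ∂μ, x ∈ s → ∀ δ : ℝ, 0 < δ → ∃ k, {n | δ ≤ f n x} ⊆ C k)
    {ε : ENNReal} (hε : ε ≠ 0) :
    ∃ B ⊆ s, MeasurableSet B ∧ μ B ≤ ε ∧
      ∀ δ : ℝ, 0 < δ → ∃ k, ∀ x ∈ s \ B, {n | δ ≤ f n x} ⊆ C k := by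
  let E (j : ℕ) (k : κ) : Set α := s ∩ exceptionalSet C f (1 / ((j : ℝ) + 1)) k
  have hE (j : ℕ) : Tendsto (fun k => μ (E j k)) atTop (𝓝 0) :=
    tendsto_measure_inter_exceptionalSet hC hf hs hμs <|
      hconv.mono fun _ hx hxs => hx hxs _ Nat.one_div_pos_of_nat
  obtain ⟨k, hk⟩ := exists_measure_iUnion_le_of_tendsto_zero hE hε
  refine ⟨⋃ j, E j (k j), iUnion_subset fun _ => inter_subset_left,
    .iUnion fun j => hs.inter (measurableSet_exceptionalSet hf (k j)), hk, fun δ hδ => ?_⟩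
  obtain ⟨j, hj⟩ := exists_nat_one_div_lt hδ
  refine ⟨k j, fun x ⟨hxs, hxB⟩ => ?_⟩
  have h_level : {n | 1 / ((j : ℝ) + 1) ≤ f n x} ⊆ C (k j) := by
    by_contra h
    exact hxB (mem_iUnion.2 ⟨j, hxs, h⟩)
  exact fun n hn => h_level (hj.le.trans hn)

end Egorov

theorem stmt_11 (C : ℕ → Set ℕ) (hC : Monotone C)
    (f : ℕ → ℝ → ℝ) (hmeas : ∀ n : ℕ, Measurable (f n))
    (hmaps : ∀ n : ℕ, ∀ x ∈ Set.Icc (0 : ℝ) 1, f n x ∈ Set.Icc (0 : ℝ) 1)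
    (hconv : CgPointwise C f (Set.Icc 0 1))
    (ε : ℝ) (hε : 0 < ε) :
    ∃ B ⊆ Set.Icc (0 : ℝ) 1, MeasurableSet B ∧ volume B ≤ ENNReal.ofReal ε ∧
      CgUniform C f (Set.Icc 0 1 \ B) :=
  stmt_11_general hC hmeas measurableSet_Icc (by simp)
    (ae_of_all _ fun x hx δ hδ => hconv δ hδ x hx) (ENNReal.ofReal_pos.2 hε).ne'
end

section
/- Let C : ℕ → 𝒫(ℕ) be a nondecreasing sequence of subsets of ℕ with C_{i+1} \ C_i ≠ ∅ for every i, generating the ideal I = {A ⊆ ℕ : A ⊆ C_k for some k}. Then for every function φ : [0,1] → ℕ^ℕ such that, for every x ∈ [0,1], φ(x) is strictly increasing and φ(x)(0) = 0, there exists a sequence F = ⟨f_n⟩_{n∈ℕ} of functions f_n : [0,1] → [0,1] converging to 0 I-pointwise on [0,1] such that o_C(F)(x)(n) = φ(x)(n) for every x ∈ [0,1] and every n ∈ ℕ, where o_C(F)(x)(n) = min{ k ∈ ℕ : {m : f_m(x) > 2^{-n}} ⊆ C_k }. -/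
open MeasureTheory Filter Set

/-!
At each point `x` only the nested sets `C (φ x 1) ⊆ C (φ x 2) ⊆ ⋯` matter. Let `f_m(x) = 2^{-j}`
where `j` is the first index with `m ∈ C (φ x (j + 1))`, and `f_m(x) = 0` if there is none. Then
`f_m(x) > 2^{-n}` exactly when `m` has entered by stage `n`, so this level set is `C (φ x n)` for
`n ≥ 1` and empty for `n = 0`. As `C` is strictly increasing, `C k` contains it exactly when
`φ x n ≤ k`.
-/

section EntryValue

variable {ι R : Type*} [LinearOrder R] [Zero R] {a : ℕ → R}

open scoped Classical in
/-- The weight `a j` of the first index `j` with `m ∈ E j`, or `0` if `m` lies in no `E j`. With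
`a` strictly decreasing it turns the sets `E j` into the superlevel sets of a function of `m`. -/
noncomputable def entryValue (a : ℕ → R) (E : ℕ → Set ι) (m : ι) : R :=
  if h : ∃ j, m ∈ E j then a (Nat.find h) else 0

theorem entryValue_mem_Icc (ha : Antitone a) (ha_nonneg : ∀ n, 0 ≤ a n)
    (E : ℕ → Set ι) (m : ι) : entryValue a E m ∈ Icc 0 (a 0) := by
  unfold entryValue
  split_ifs
  · exact ⟨ha_nonneg _, ha (Nat.zero_le _)⟩
  · exact ⟨le_rfl, ha_nonneg 0⟩

theorem lt_entryValue_iff (ha : StrictAnti a) (ha_nonneg : ∀ n, 0 ≤ a n)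
    {E : ℕ → Set ι} {m : ι} {n : ℕ} : a n < entryValue a E m ↔ ∃ j < n, m ∈ E j := by
  classical
  unfold entryValue
  split_ifs with h
  · rw [ha.lt_iff_gt, Nat.find_lt_iff]
  · exact iff_of_false (ha_nonneg n).not_gt fun ⟨j, _, hj⟩ => h ⟨j, hj⟩

theorem setOf_lt_entryValue_subset_iff (ha : StrictAnti a) (ha_nonneg : ∀ n, 0 ≤ a n)
    {C : ℕ → Set ι} (hC : StrictMono C) {ψ : ℕ → ℕ} (hψ : Monotone ψ) (hψ_zero : ψ 0 = 0)
    {n k : ℕ} : {m | a n < entryValue a (fun j => C (ψ (j + 1))) m} ⊆ C k ↔ ψ n ≤ k := by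
  have level_eq : {m | a n < entryValue a (fun j => C (ψ (j + 1))) m} =
      ⋃ j < n, C (ψ (j + 1)) := by
    ext m
    simp only [mem_ofPred_eq, lt_entryValue_iff ha ha_nonneg, mem_iUnion, exists_prop]
  have subset_iff : ∀ j, C (ψ (j + 1)) ⊆ C k ↔ ψ (j + 1) ≤ k := fun j => hC.le_iff_le
  simp only [level_eq, iUnion_subset_iff, subset_iff]
  cases n with
  | zero => simp [hψ_zero]
  | succ n => exact ⟨fun h => h n n.lt_succ_self, fun h j hj => (hψ hj).trans h⟩

end EntryValue

theorem stmt_13_general {X ι : Type*} {C : ℕ → Set ι} (hC : StrictMono C) {A : Set X}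
    {φ : X → ℕ → ℕ} (hφ : ∀ x ∈ A, Monotone (φ x) ∧ φ x 0 = 0) :
    ∃ f : ι → X → ℝ,
      (∀ m x, f m x ∈ Icc (0 : ℝ) 1) ∧
      (∀ δ : ℝ, 0 < δ → ∀ x ∈ A, ∃ k, {m | δ ≤ f m x} ⊆ C k) ∧
      ∀ x ∈ A, ∀ n : ℕ, IsLeast {k | {m | 1 / 2 ^ n < f m x} ⊆ C k} (φ x n) := by
  let a : ℕ → ℝ := fun n => 1 / 2 ^ n
  let f : ι → X → ℝ := fun m x => entryValue a (fun j => C (φ x (j + 1))) m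
  have ha : StrictAnti a := one_div_pow_strictAnti one_lt_two
  have ha_nonneg : ∀ n, 0 ≤ a n := fun n => by positivity
  have ha_zero : a 0 = 1 := by norm_num [a]
  have level_subset_iff : ∀ x ∈ A, ∀ n k, {m | a n < f m x} ⊆ C k ↔ φ x n ≤ k :=
    fun x hx n k => setOf_lt_entryValue_subset_iff ha ha_nonneg hC (hφ x hx).1 (hφ x hx).2
  refine ⟨f, fun m x => ?_, fun δ hδ x hx => ?_, fun x hx n => ?_⟩
  · exact ha_zero ▸ entryValue_mem_Icc ha.antitone ha_nonneg _ m
  · obtain ⟨n, hn⟩ : ∃ n, a n < δ := by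
      simpa only [a, one_div_pow] using exists_pow_lt_of_lt_one hδ one_half_lt_one
    exact ⟨φ x n, fun m hm => (level_subset_iff x hx n _).2 le_rfl (hn.trans_le hm)⟩
  · exact ⟨(level_subset_iff x hx n _).2 le_rfl, fun k hk => (level_subset_iff x hx n k).1 hk⟩

theorem stmt_13 (C : ℕ → Set ℕ) (hC : Monotone C)
    (hCne : ∀ i : ℕ, (C (i + 1) \ C i).Nonempty)
    (φ : ℝ → ℕ → ℕ)
    (hφ : ∀ x ∈ Set.Icc (0 : ℝ) 1, StrictMono (φ x) ∧ φ x 0 = 0) :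
    ∃ f : ℕ → ℝ → ℝ,
      (∀ n : ℕ, ∀ x ∈ Set.Icc (0 : ℝ) 1, f n x ∈ Set.Icc (0 : ℝ) 1) ∧
      CgPointwise C f (Set.Icc 0 1) ∧
      ∀ o : ℝ → ℕ → ℕ,
        (∀ x ∈ Set.Icc (0 : ℝ) 1, ∀ n : ℕ,
          IsLeast {k : ℕ | {m : ℕ | 1 / 2 ^ n < f m x} ⊆ C k} (o x n)) →
        ∀ x ∈ Set.Icc (0 : ℝ) 1, ∀ n : ℕ, o x n = φ x n := by
  have hC_strict : StrictMono C :=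
    strictMono_nat_of_lt_succ fun i => ⟨hC i.le_succ, sdiff_nonempty.1 (hCne i)⟩
  obtain ⟨f, f_mem, f_conv, f_least⟩ :=
    stmt_13_general hC_strict fun x hx => ⟨(hφ x hx).1.monotone, (hφ x hx).2⟩
  exact ⟨f, fun n x _ => f_mem n x, f_conv,
    fun o ho x hx n => (ho x hx n).unique (f_least x hx n)⟩
end

section
/- Let C : ℕ → 𝒫(ℕ) be a nondecreasing sequence of subsets of ℕ, each with infinite complement ℕ \ C_n, generating the ideal I = {A ⊆ ℕ : A ⊆ C_k for some k}. Let f_n : [0,1] → [0,1] (n ∈ ℕ) be Lebesgue-measurable functions converging to 0 I*-pointwise on [0,1], and let ε > 0. Then there exists a Lebesgue-measurable set B ⊆ [0,1] with m(B) ≤ ε such that f_n converges to 0 I*-uniformly on [0,1] \ B. -/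
open MeasureTheory Filter Set

/-- `f` converges to `0` `I*`-pointwise on `A`, where `I` is the ideal
generated by the nondecreasing sequence `C`. -/
def CgStarPointwise (C : ℕ → Set ℕ) (f : ℕ → ℝ → ℝ) (A : Set ℝ) : Prop :=
  ∀ x ∈ A, ∃ k : ℕ, ∃ M : Set ℕ, M.Infinite ∧ Mᶜ ⊆ C k ∧
    ∀ δ : ℝ, 0 < δ → {m : ℕ | m ∈ M ∧ δ ≤ f m x}.Finite

/-- `f` converges to `0` `I*`-uniformly on `A`, where `I` is the ideal
generated by the nondecreasing sequence `C`. -/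
def CgStarUniform (C : ℕ → Set ℕ) (f : ℕ → ℝ → ℝ) (A : Set ℝ) : Prop :=
  ∃ k : ℕ, ∃ M : Set ℕ, M.Infinite ∧ Mᶜ ⊆ C k ∧
    ∀ δ : ℝ, 0 < δ → ∃ p : ℕ, ∀ x ∈ A, ∀ m ∈ M, p ≤ m → f m x < δ

open scoped Topology ENNReal

/-!
If `f` converges to `0` along `M` with `Mᶜ ⊆ C k`, then it converges to `0` along the smaller set
`(C k)ᶜ`, so the witness `M` may be taken from the countable family `(C k)ᶜ`. The sets of points at
which `f` converges along `(C k)ᶜ` are measurable, increase with `k` and cover the given set, so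
one of them misses only a set of small measure. On that set the classical Egorov theorem, applied
along `(C k)ᶜ`, gives uniform convergence off another set of small measure.
-/

theorem exists_measure_sdiff_lt_of_monotone {α κ : Type*} [MeasurableSpace α] {μ : Measure α}
    [Preorder κ] [IsDirectedOrder κ] [Nonempty κ] [(atTop : Filter κ).IsCountablyGenerated]
    {s : Set α} {A : κ → Set α} (hs : NullMeasurableSet s μ) (hμs : μ s ≠ ∞)
    (hA : ∀ k, NullMeasurableSet (A k) μ) (hmono : Monotone A) (hcover : μ (s \ ⋃ k, A k) = 0)
    {δ : ℝ≥0∞} (hδ : 0 < δ) : ∃ k, μ (s \ A k) < δ := by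
  have hlim : Tendsto (fun k => μ (s \ A k)) atTop (𝓝 0) := by
    rw [← hcover, sdiff_iUnion]
    exact tendsto_measure_iInter_atTop (fun k => hs.diff (hA k))
      (fun _ _ hij => sdiff_subset_sdiff_right (hmono hij))
      ⟨Classical.arbitrary κ, measure_ne_top_of_subset sdiff_subset hμs⟩
  exact (hlim.eventually_lt_const hδ).exists

section Egorov

variable {α ι κ E : Type*} [MeasurableSpace α] {μ : Measure α} [PseudoEMetricSpace E]
  [SemilatticeSup ι] [Nonempty ι] [Countable ι]
  {f : ι → α → E} {g : α → E} {s : Set α} {ε : ℝ}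

theorem exists_tendstoUniformlyOn_sdiff_inf_principal {S : Set ι}
    (hf : ∀ n ∈ S, Measurable fun x => edist (f n x) (g x))
    (hs : MeasurableSet s) (hμs : μ s ≠ ∞)
    (hfg : ∀ᵐ x ∂μ, x ∈ s → Tendsto (f · x) (atTop ⊓ 𝓟 S) (𝓝 (g x))) (hε : 0 < ε) :
    ∃ t ⊆ s, MeasurableSet t ∧ μ t ≤ ENNReal.ofReal ε ∧
      TendstoUniformlyOn f g (atTop ⊓ 𝓟 S) (s \ t) := by
  classical
  -- Replacing `f n` by the limit for `n ∉ S` turns convergence along `S` into convergence.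
  let F : ι → α → E := S.piecewise f fun _ => g
  have hF_of_mem : ∀ n ∈ S, F n = f n := fun n hn => piecewise_eq_of_mem S _ _ hn
  have hF_of_notMem : ∀ n ∉ S, F n = g := fun n hn => piecewise_eq_of_notMem S _ _ hn
  have hF : ∀ n, Measurable fun x => edist (F n x) (g x) := by
    intro n
    by_cases hn : n ∈ S
    · simpa only [hF_of_mem n hn] using hf n hn
    · simp only [hF_of_notMem n hn, edist_self, measurable_const]
  have hFg : ∀ᵐ x ∂μ, x ∈ s → Tendsto (F · x) atTop (𝓝 (g x)) := by
    filter_upwards [hfg] with x hx hxs U hU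
    have hfU : ∀ᶠ n in atTop, n ∈ S → f n x ∈ U := eventually_inf_principal.1 (hx hxs hU)
    rw [mem_map]
    filter_upwards [hfU] with n hn
    by_cases hnS : n ∈ S
    · simpa only [mem_preimage, hF_of_mem n hnS] using hn hnS
    · simpa only [mem_preimage, hF_of_notMem n hnS] using mem_of_mem_nhds hU
  obtain ⟨t, hts, ht, hμt, hunif⟩ :=
    tendstoUniformlyOn_of_ae_tendsto_of_measurable_edist hF hs hμs hFg hε
  refine ⟨t, hts, ht, hμt, fun V hV => eventually_inf_principal.2 ?_⟩
  filter_upwards [hunif V hV] with n hn hnS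
  simpa only [hF_of_mem n hnS] using hn

theorem exists_tendstoUniformlyOn_sdiff_inf_principal_of_antitone
    [Preorder κ] [IsDirectedOrder κ] [Nonempty κ] [(atTop : Filter κ).IsCountablyGenerated]
    {S : κ → Set ι} (hS : Antitone S) (hf : ∀ n, Measurable fun x => edist (f n x) (g x))
    (hs : MeasurableSet s) (hμs : μ s ≠ ∞)
    (hfg : ∀ᵐ x ∂μ, x ∈ s → ∃ k, Tendsto (f · x) (atTop ⊓ 𝓟 (S k)) (𝓝 (g x))) (hε : 0 < ε) :
    ∃ t ⊆ s, MeasurableSet t ∧ μ t ≤ ENNReal.ofReal ε ∧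
      ∃ k, TendstoUniformlyOn f g (atTop ⊓ 𝓟 (S k)) (s \ t) := by
  let A : κ → Set α := fun k => {x | Tendsto (f · x) (atTop ⊓ 𝓟 (S k)) (𝓝 (g x))}
  have hA : ∀ k, MeasurableSet (A k) := by
    intro k
    simp only [A, tendsto_iff_edist_tendsto_0 (y := g _)]
    exact measurableSet_tendsto (𝓝 0) hf
  have hA_mono : Monotone A := fun _ _ hij _ hx =>
    hx.mono_left (inf_le_inf_left _ (principal_mono.2 (hS hij)))
  have hA_cover : μ (s \ ⋃ k, A k) = 0 := by
    rw [← ae_le_set]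
    filter_upwards [hfg] with x hx hxs
    exact mem_iUnion.2 (hx hxs)
  obtain ⟨k, hk⟩ := exists_measure_sdiff_lt_of_monotone hs.nullMeasurableSet hμs
    (fun k => (hA k).nullMeasurableSet) hA_mono hA_cover (ENNReal.ofReal_pos.2 (half_pos hε))
  obtain ⟨t, hts, ht, hμt, hunif⟩ := exists_tendstoUniformlyOn_sdiff_inf_principal
    (fun n _ => hf n) (hs.inter (hA k)) (measure_ne_top_of_subset inter_subset_left hμs)
    (Eventually.of_forall fun x hx => hx.2) (half_pos hε)
  refine ⟨s \ A k ∪ t, union_subset sdiff_subset (hts.trans inter_subset_left),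
    (hs.diff (hA k)).union ht, ?_, k, hunif.mono fun x hx => ?_⟩
  · calc μ (s \ A k ∪ t) ≤ μ (s \ A k) + μ t := measure_union_le _ _
      _ ≤ ENNReal.ofReal (ε / 2) + ENNReal.ofReal (ε / 2) := add_le_add hk.le hμt
      _ = ENNReal.ofReal ε := by
        rw [← ENNReal.ofReal_add (half_pos hε).le (half_pos hε).le, add_halves]
  · have hxA : x ∈ A k := by_contra fun h => hx.2 (Or.inl ⟨hx.1, h⟩)
    exact ⟨⟨hx.1, hxA⟩, fun h => hx.2 (Or.inr h)⟩

end Egorov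

/-- The inequalities in `CgStarPointwise` and `CgStarUniform` bound `f` from above only, so what
converges to `0` is the positive part of `f`. -/
theorem CgStarPointwise.exists_tendsto_posPart {C : ℕ → Set ℕ} {f : ℕ → ℝ → ℝ} {A : Set ℝ}
    (h : CgStarPointwise C f A) {x : ℝ} (hx : x ∈ A) :
    ∃ k, Tendsto (fun n => (f n x)⁺) (atTop ⊓ 𝓟 (C k)ᶜ) (𝓝 0) := by
  obtain ⟨k, M, -, hMC, hfin⟩ := h x hx
  refine ⟨k, tendsto_order.2 ⟨fun a ha => ?_, fun δ hδ => ?_⟩⟩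
  · exact Eventually.of_forall fun n => ha.trans_le (posPart_nonneg _)
  · have hlarge : ∀ᶠ n in atTop, ¬(n ∈ M ∧ δ ≤ f n x) :=
      Nat.cofinite_eq_atTop ▸ (hfin δ hδ).eventually_cofinite_notMem
    refine eventually_inf_principal.2 (hlarge.mono fun n hn hnC => ?_)
    have hnM : n ∈ M := compl_subset_comm.1 hMC hnC
    exact max_lt (not_le.1 fun hle => hn ⟨hnM, hle⟩) hδ

theorem CgStarUniform.of_tendstoUniformlyOn_posPart {C : ℕ → Set ℕ} {f : ℕ → ℝ → ℝ}
    {A : Set ℝ} {k : ℕ} (hk : (C k)ᶜ.Infinite)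
    (h : TendstoUniformlyOn (fun n x => (f n x)⁺) 0 (atTop ⊓ 𝓟 (C k)ᶜ) A) :
    CgStarUniform C f A := by
  refine ⟨k, (C k)ᶜ, hk, (compl_compl _).subset, fun δ hδ => ?_⟩
  obtain ⟨p, hp⟩ := eventually_atTop.1 <| eventually_inf_principal.1 <|
    Metric.tendstoUniformlyOn_iff.1 h δ hδ
  refine ⟨p, fun x hx m hm hpm => ?_⟩
  calc f m x ≤ (f m x)⁺ := le_posPart _
    _ ≤ |(f m x)⁺| := le_abs_self _
    _ = dist ((0 : ℝ → ℝ) x) (f m x)⁺ := by rw [dist_comm, Pi.zero_apply, Real.dist_0_eq_abs]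
    _ < δ := hp m hpm hm x hx

theorem stmt_15_general {μ : Measure ℝ} {s : Set ℝ} (hs : MeasurableSet s) (hμs : μ s ≠ ∞)
    {C : ℕ → Set ℕ} (hC : Monotone C) (hCinf : ∀ n, (C n)ᶜ.Infinite)
    {f : ℕ → ℝ → ℝ} (hmeas : ∀ n, Measurable (f n)) (hconv : CgStarPointwise C f s)
    {ε : ℝ} (hε : 0 < ε) :
    ∃ B ⊆ s, MeasurableSet B ∧ μ B ≤ ENNReal.ofReal ε ∧ CgStarUniform C f (s \ B) := by
  have hC_compl : Antitone fun k => (C k)ᶜ := fun _ _ hij => compl_subset_compl.2 (hC hij)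
  have hposPart : ∀ n, Measurable fun x => edist (f n x)⁺ ((0 : ℝ → ℝ) x) := fun n =>
    ((hmeas n).sup_const 0).edist measurable_const
  obtain ⟨B, hBs, hB, hμB, k, hunif⟩ :=
    exists_tendstoUniformlyOn_sdiff_inf_principal_of_antitone hC_compl hposPart hs hμs
      (Eventually.of_forall fun _ => hconv.exists_tendsto_posPart) hε
  exact ⟨B, hBs, hB, hμB, .of_tendstoUniformlyOn_posPart (hCinf k) hunif⟩

theorem stmt_15 (C : ℕ → Set ℕ) (hC : Monotone C)
    (hCinf : ∀ n : ℕ, (C n)ᶜ.Infinite)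
    (f : ℕ → ℝ → ℝ) (hmeas : ∀ n : ℕ, Measurable (f n))
    (hmaps : ∀ n : ℕ, ∀ x ∈ Set.Icc (0 : ℝ) 1, f n x ∈ Set.Icc (0 : ℝ) 1)
    (hconv : CgStarPointwise C f (Set.Icc 0 1))
    (ε : ℝ) (hε : 0 < ε) :
    ∃ B ⊆ Set.Icc (0 : ℝ) 1, MeasurableSet B ∧ volume B ≤ ENNReal.ofReal ε ∧
      CgStarUniform C f (Set.Icc 0 1 \ B) :=
  stmt_15_general measurableSet_Icc measure_Icc_lt_top.ne hC hCinf hmeas hconv hε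
end

section
/- Assume there exists a set N ⊆ [0,1] of positive Lebesgue outer measure such that for every function g : N → ℕ^ℕ there exists h : ℕ → ℕ with g(x) ≤* h for all x ∈ N (i.e. non(N) < 𝔟). Let C : ℕ → 𝒫(ℕ) be a nondecreasing sequence of subsets of ℕ, each with infinite complement ℕ \ C_n, generating the ideal I = {A ⊆ ℕ : A ⊆ C_k for some k}. Let ε > 0 and let f_n : [0,1] → [0,1] be a sequence converging to 0 I*-pointwise on [0,1]. Then there exists A ⊆ [0,1] with m*(A) ≥ 1 − ε such that f_n converges to 0 I*-uniformly on A. -/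
open MeasureTheory Filter Set

/-!
Adding all rational translates to the given nonnull set `N` keeps it eventually dominated, since
countably many functions `ℕ → ℕ` have a common eventual bound. By Steinhaus' theorem and the
ergodicity of translations, the resulting rationally invariant set `E` has full outer measure in
every measurable set. A function `h` that eventually dominates the convergence rates at the points
of `E ∩ [0, 1]` writes this set as an increasing union of sets on which the convergence is uniform,
and outer measure is continuous along increasing unions.
-/

open scoped Pointwise

section Domination

variable {α β : Type*}

lemma exists_forall_eventuallyLE_atTop_of_countable {ι : Type*} [Countable ι] [SemilatticeSup β]
    [Nonempty β] (H : ι → ℕ → β) : ∃ h : ℕ → β, ∀ i, H i ≤ᶠ[atTop] h := by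
  cases isEmpty_or_nonempty ι with
  | inl _ => exact ⟨fun _ ↦ Classical.arbitrary β, isEmptyElim⟩
  | inr _ =>
    obtain ⟨e, he⟩ := exists_surjective_nat ι
    refine ⟨fun n ↦ partialSups (fun j ↦ H (e j) n) n, he.forall.2 fun i ↦ ?_⟩
    filter_upwards [eventually_ge_atTop i] with n hin
    exact le_partialSups_of_le (fun j ↦ H (e j) n) hin

/-- Every family of functions `ℕ → ℕ` indexed by `N` is eventually dominated by a single function;
equivalently, the cardinality of `N` is less than the bounding number `𝔟`. The family is given on
the whole type `α`, but only its values on `N` matter. -/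
def EventuallyDominated (N : Set α) : Prop :=
  ∀ g : α → ℕ → ℕ, ∃ h : ℕ → ℕ, ∀ x ∈ N, g x ≤ᶠ[atTop] h

namespace EventuallyDominated

lemma mono {M N : Set α} (hN : EventuallyDominated N) (hMN : M ⊆ N) : EventuallyDominated M :=
  fun g ↦ (hN g).imp fun _ hh x hx ↦ hh x (hMN hx)

lemma image {N : Set α} (hN : EventuallyDominated N) (φ : α → β) :
    EventuallyDominated (φ '' N) :=
  fun g ↦ (hN (g ∘ φ)).imp fun _ hh ↦ forall_mem_image.2 hh

lemma iUnion {ι : Type*} [Countable ι] {N : ι → Set α} (hN : ∀ i, EventuallyDominated (N i)) :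
    EventuallyDominated (⋃ i, N i) := by
  intro g
  choose H hH using fun i ↦ hN i g
  obtain ⟨h, hh⟩ := exists_forall_eventuallyLE_atTop_of_countable H
  refine ⟨h, fun x hx ↦ ?_⟩
  obtain ⟨i, hi⟩ := mem_iUnion.1 hx
  exact (hH i x hi).trans (hh i)

lemma add_left_of_countable [Add α] {D N : Set α} (hN : EventuallyDominated N)
    (hD : D.Countable) : EventuallyDominated (D + N) := by
  have := hD.to_subtype
  rw [← iUnion_add_left_image, biUnion_eq_iUnion]
  exact iUnion fun d : D ↦ hN.image (d.1 + ·)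

end EventuallyDominated

end Domination

section ZeroOne

variable {G : Type*} [AddGroup G] [TopologicalSpace G] [IsTopologicalAddGroup G]
  [LocallyCompactSpace G] [SecondCountableTopology G] [MeasurableSpace G] [BorelSpace G]
  {μ : Measure G} [μ.IsAddHaarMeasure]

lemma measure_preimage_add_diff_eq_zero_of_dense {D s : Set G} (hD : Dense D)
    (hs : MeasurableSet s) (hinv : ∀ d ∈ D, ∀ x ∈ s, d + x ∈ s) (a : G) :
    μ ((a + ·) ⁻¹' s \ s) = 0 := by
  by_contra hF
  -- By Steinhaus, elements of `D` near `-a` carry a point of `s` to a point outside `s`.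
  have hsteinhaus : ((a + ·) ⁻¹' s \ s) - ((a + ·) ⁻¹' s \ s) ∈ nhds (-a + a) := by
    rw [neg_add_cancel]
    exact Measure.sub_mem_nhds_zero_of_addHaar_pos μ _
      ((measurable_const_add a hs).diff hs) (pos_iff_ne_zero.2 hF)
  obtain ⟨d, hd, z, hz, y, hy, (hzy : z - y = d + a)⟩ :=
    hD.inter_nhds_nonempty ((continuous_add_const a).continuousAt hsteinhaus)
  have hz_eq : d + (a + y) = z := by
    rw [← add_assoc, ← hzy, sub_add_cancel]
  exact hz.2 (hz_eq ▸ hinv d hd _ hy.1)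

theorem eventuallyConst_ae_of_dense_add_mem {D s : Set G} (hD : Dense D)
    (hs : MeasurableSet s) (hinv : ∀ d ∈ D, ∀ x ∈ s, d + x ∈ s) :
    EventuallyConst s (ae μ) := by
  have hle (a : G) : (a + ·) ⁻¹' s ≤ᵐ[μ] s :=
    ae_le_set.2 (measure_preimage_add_diff_eq_zero_of_dense hD hs hinv a)
  refine aeconst_of_forall_preimage_vadd_ae_eq G hs.nullMeasurableSet fun a ↦
    (hle a).antisymm ?_
  simpa only [preimage_preimage, neg_add_cancel_left, preimage_id'] using
    (measurePreserving_add_left μ a).quasiMeasurePreserving.preimage_mono_ae (hle (-a))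

theorem measure_inter_eq_of_dense_add_mem {D : AddSubmonoid G} [Countable D]
    (hD : Dense (D : Set G)) {E S : Set G} (hinv : ∀ d ∈ D, ∀ x ∈ E, d + x ∈ E)
    (hE : μ E ≠ 0) (hS : MeasurableSet S) : μ (E ∩ S) = μ S := by
  let K := toMeasurable μ E
  let H := ⋂ d : D, ((d : G) + ·) ⁻¹' K
  have hEH : E ⊆ H := fun x hx ↦ mem_iInter.2 fun d ↦ subset_toMeasurable μ E (hinv d d.2 x hx)
  have hHK : H ⊆ K := fun x hx ↦ by simpa using mem_iInter.1 hx 0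
  have hH : MeasurableSet H :=
    .iInter fun d ↦ measurable_const_add (d : G) (measurableSet_toMeasurable μ E)
  have hHinv : ∀ d ∈ D, ∀ x ∈ H, d + x ∈ H := fun d hd x hx ↦ mem_iInter.2 fun c ↦ by
    simpa [add_assoc] using mem_iInter.1 hx (c + ⟨d, hd⟩)
  have hH_univ : H =ᵐ[μ] univ := by
    refine eventuallyEq_univ.2
      ((eventuallyConst_set.1 (eventuallyConst_ae_of_dense_add_mem hD hH hHinv)).resolve_right
        fun hnull ↦ hE ?_)
    exact measure_mono_null hEH (measure_eq_zero_iff_ae_notMem.2 hnull)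
  have hK_univ : K =ᵐ[μ] univ :=
    eventuallyEq_univ.2 (mem_of_superset (eventuallyEq_univ.1 hH_univ) hHK)
  calc μ (E ∩ S) = μ (K ∩ S) := (Measure.measure_toMeasurable_inter_of_sFinite hS E).symm
    _ = μ S := measure_congr (inter_ae_eq_right_of_ae_eq_univ hK_univ)

end ZeroOne

lemma EventuallyDominated.exists_forall_volume_inter_eq {N : Set ℝ}
    (hN : EventuallyDominated N) (hN0 : volume N ≠ 0) :
    ∃ E, EventuallyDominated E ∧
      ∀ S : Set ℝ, MeasurableSet S → volume (E ∩ S) = volume S := by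
  let D : AddSubmonoid ℝ := AddMonoidHom.mrange (algebraMap ℚ ℝ)
  have hDc : (D : Set ℝ).Countable := countable_range _
  have hDd : Dense (D : Set ℝ) := Rat.denseRange_cast
  have := hDc.to_subtype
  have hNE : N ⊆ (D : Set ℝ) + N := subset_add_right N D.zero_mem
  refine ⟨D + N, hN.add_left_of_countable hDc, fun S hS ↦
    measure_inter_eq_of_dense_add_mem hDd ?_ (fun h ↦ hN0 (measure_mono_null hNE h)) hS⟩
  rintro d hd _ ⟨c, hc, x, hx, rfl⟩
  exact ⟨d + c, D.add_mem hd hc, x, hx, add_assoc d c x⟩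

section IdealConvergence

variable {C : ℕ → Set ℕ} {f : ℕ → ℝ → ℝ} {A : Set ℝ}

/-- The set of points at which, for every `n ≥ j`, the values `f m x` with `m ∉ C j` are less than
`1 / (n + 1)` from the index `h n` on. The parameter `j` bounds both the index of the exceptional
set and the point from which `h` dominates the convergence rate; these sets serve to exhaust a set
of pointwise convergence by sets of uniform convergence. -/
def uniformStage (C : ℕ → Set ℕ) (f : ℕ → ℝ → ℝ) (h : ℕ → ℕ) (j : ℕ) : Set ℝ :=
  {x | ∀ n ≥ j, ∀ m ∉ C j, h n ≤ m → f m x < 1 / (n + 1)}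

lemma monotone_uniformStage (hC : Monotone C) (h : ℕ → ℕ) : Monotone (uniformStage C f h) :=
  fun _ _ hij _ hx n hn m hm ↦ hx n (hij.trans hn) m fun hmem ↦ hm (hC hij hmem)

lemma CgStarUniform.mono {B : Set ℝ} (hB : CgStarUniform C f B) (hAB : A ⊆ B) :
    CgStarUniform C f A := by
  obtain ⟨k, M, hM, hMC, hlt⟩ := hB
  exact ⟨k, M, hM, hMC, fun δ hδ ↦ (hlt δ hδ).imp fun _ hp x hx ↦ hp x (hAB hx)⟩

lemma cgStarUniform_uniformStage {j : ℕ} (hCinf : (C j)ᶜ.Infinite) (h : ℕ → ℕ) :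
    CgStarUniform C f (uniformStage C f h j) := by
  refine ⟨j, (C j)ᶜ, hCinf, (compl_compl _).subset, fun δ hδ ↦ ?_⟩
  obtain ⟨n, hn⟩ := exists_nat_one_div_lt hδ
  refine ⟨h (max n j), fun x hx m hm hhm ↦ ?_⟩
  calc f m x < 1 / ((max n j : ℕ) + 1) := hx _ (le_max_right n j) m hm hhm
    _ ≤ 1 / (n + 1) := Nat.one_div_le_one_div (le_max_left n j)
    _ < δ := hn

lemma CgStarPointwise.exists_rate (hf : CgStarPointwise C f A) {x : ℝ} (hx : x ∈ A) :
    ∃ k : ℕ, ∃ p : ℕ → ℕ, ∀ n, ∀ m ∉ C k, p n ≤ m → f m x < 1 / (n + 1) := by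
  obtain ⟨k, M, -, hMC, hfin⟩ := hf x hx
  have hevent (n : ℕ) : ∃ p, ∀ m ∉ C k, p ≤ m → f m x < 1 / (n + 1) := by
    obtain ⟨b, hb⟩ := (hfin (1 / (n + 1)) Nat.one_div_pos_of_nat).bddAbove
    refine ⟨b + 1, fun m hm hbm ↦ ?_⟩
    by_contra! hle
    exact absurd (hb ⟨notMem_compl_iff.1 fun hmM ↦ hm (hMC hmM), hle⟩) (by omega)
  choose p hp using hevent
  exact ⟨k, p, hp⟩

lemma CgStarPointwise.exists_subset_iUnion_uniformStage (hf : CgStarPointwise C f A)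
    (hC : Monotone C) (hA : EventuallyDominated A) :
    ∃ h : ℕ → ℕ, A ⊆ ⋃ j, uniformStage C f h j := by
  choose! k p hp using fun x hx ↦ hf.exists_rate (x := x) hx
  obtain ⟨h, hh⟩ := hA p
  refine ⟨h, fun x hx ↦ ?_⟩
  obtain ⟨i, hi⟩ := eventually_atTop.1 (hh x hx)
  refine mem_iUnion.2 ⟨max (k x) i, fun n hn m hm hhm ↦ hp x hx n m ?_ ?_⟩
  · exact fun hmem ↦ hm (hC (le_max_left _ _) hmem)
  · exact (hi n ((le_max_right _ _).trans hn)).trans hhm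

lemma CgStarPointwise.exists_subset_lt_measure_cgStarUniform (hf : CgStarPointwise C f A)
    (hC : Monotone C) (hCinf : ∀ n, (C n)ᶜ.Infinite) (hA : EventuallyDominated A)
    {μ : Measure ℝ} {c : ENNReal} (hc : c < μ A) :
    ∃ B ⊆ A, c < μ B ∧ CgStarUniform C f B := by
  obtain ⟨h, hAh⟩ := hf.exists_subset_iUnion_uniformStage hC hA
  have hmono : Monotone fun j ↦ A ∩ uniformStage C f h j :=
    monotone_const.inter (monotone_uniformStage hC h)
  rw [← inter_eq_left.2 hAh, inter_iUnion, hmono.measure_iUnion] at hc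
  obtain ⟨j, hj⟩ := lt_iSup_iff.1 hc
  exact ⟨_, inter_subset_left, hj, (cgStarUniform_uniformStage (hCinf j) h).mono inter_subset_right⟩

end IdealConvergence

theorem stmt_16_general {N : Set ℝ} (hN : EventuallyDominated N) (hN0 : volume N ≠ 0)
    {C : ℕ → Set ℕ} (hC : Monotone C) (hCinf : ∀ n, (C n)ᶜ.Infinite) {f : ℕ → ℝ → ℝ}
    {S : Set ℝ} (hS : MeasurableSet S) (hconv : CgStarPointwise C f S)
    {c : ENNReal} (hc : c < volume S) :
    ∃ A ⊆ S, c < volume A ∧ CgStarUniform C f A := by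
  obtain ⟨E, hE, hES⟩ := hN.exists_forall_volume_inter_eq hN0
  have hconvE : CgStarPointwise C f (E ∩ S) := fun x hx ↦ hconv x hx.2
  obtain ⟨A, hA, hcA, hunif⟩ := hconvE.exists_subset_lt_measure_cgStarUniform hC hCinf
    (hE.mono inter_subset_left) (hc.trans_eq (hES S hS).symm)
  exact ⟨A, hA.trans inter_subset_right, hcA, hunif⟩

theorem stmt_16
    (hyp : ∃ N : Set ℝ, N ⊆ Set.Icc 0 1 ∧ 0 < volume N ∧
      ∀ g : ℝ → ℕ → ℕ, ∃ h : ℕ → ℕ, ∀ x ∈ N, ∀ᶠ n in atTop, g x n ≤ h n)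
    (C : ℕ → Set ℕ) (hC : Monotone C)
    (hCinf : ∀ n : ℕ, (C n)ᶜ.Infinite)
    (ε : ℝ) (hε : 0 < ε)
    (f : ℕ → ℝ → ℝ)
    (hmaps : ∀ n : ℕ, ∀ x ∈ Set.Icc (0 : ℝ) 1, f n x ∈ Set.Icc (0 : ℝ) 1)
    (hconv : CgStarPointwise C f (Set.Icc 0 1)) :
    ∃ A ⊆ Set.Icc (0 : ℝ) 1, ENNReal.ofReal (1 - ε) ≤ volume A ∧
      CgStarUniform C f A := by
  obtain ⟨N, -, hN0, hN⟩ := hyp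
  obtain ⟨A, hA, hεA, hunif⟩ := stmt_16_general hN hN0.ne' hC hCinf measurableSet_Icc hconv
    (c := ENNReal.ofReal (1 - ε)) (by simpa using hε)
  exact ⟨A, hA, hεA.le, hunif⟩
end

section
/- Let C : ℕ → 𝒫(ℕ) be a nondecreasing sequence of subsets of ℕ with C_{i+1} \ C_i infinite for every i, generating the ideal I = {A ⊆ ℕ : A ⊆ C_k for some k}. For a sequence F = ⟨f_n⟩ of functions f_n : [0,1] → [0,1] converging to 0 I*-pointwise on [0,1], define o*_C(F)(x) ∈ ℕ^ℕ by: o*_C(F)(x)(0) = min{ n : for every ε > 0, f_m(x) < ε for all but finitely many m ∈ ℕ \ C_n }, and for n ≥ 1, o*_C(F)(x)(n) = min{ p : f_l(x) < 2^{-n} for every l ∈ ℕ \ C_{o*_C(F)(x)(0)} with l > p }. Then for every function φ : [0,1] → ℕ^ℕ there exists a sequence F = ⟨f_n⟩ of functions f_n : [0,1] → [0,1] converging to 0 I*-pointwise on [0,1] such that o*_C(F)(x)(n) ≥ φ(x)(n) for every x ∈ [0,1] and every n ∈ ℕ. -/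
open MeasureTheory Filter Set

/-!
It suffices to treat one point `x` at a time. Put `a = φ x`, let the sequence be `1` on `C (a 0)`
and let it be null off `C (a 0)`. Since `C (a 0) \ C i` is infinite for `i < a 0`, no smaller index
works, so the first value of the order is exactly `a 0`. Off `C (a 0)`, which leaves out infinitely
many indices, the sequence can decay as slowly as desired, and this makes the later values of the
order as large as desired.
-/

section

open scoped Topology

variable {C : ℕ → Set ℕ} {u v : ℕ → ℝ} {M S : Set ℕ}

/-- `u` converges to `0` along `M`; no lower bound is imposed, since the sequences of interest
are nonnegative. -/
def NullOn (u : ℕ → ℝ) (M : Set ℕ) : Prop :=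
  ∀ δ : ℝ, 0 < δ → {m : ℕ | m ∈ M ∧ δ ≤ u m}.Finite

/-- `I*`-convergence to `0` of a single sequence, where `I` is the ideal generated by `C`. -/
def StarNull (C : ℕ → Set ℕ) (u : ℕ → ℝ) : Prop :=
  ∃ k : ℕ, ∃ M : Set ℕ, M.Infinite ∧ Mᶜ ⊆ C k ∧ NullOn u M

/-- `o` is the order of `I*`-convergence of `u`, that is, the value `o*_C(F)(x)` at a point `x`
where `F` takes the values `u`. -/
structure IsStarOrder (C : ℕ → Set ℕ) (u : ℕ → ℝ) (o : ℕ → ℕ) : Prop where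
  isLeast_zero : IsLeast {n : ℕ | NullOn u (C n)ᶜ} (o 0)
  isLeast_of_one_le : ∀ n : ℕ, 1 ≤ n →
    IsLeast {p : ℕ | ∀ l : ℕ, l ∉ C (o 0) → p < l → u l < 1 / 2 ^ n} (o n)

/-- The sequence that is `1` off `S` and decays like `2⁻ᵏ` on `S`; off `S` the exponent is `0`. -/
noncomputable def dyadicOn (S : Set ℕ) (k : ℕ → ℕ) (m : ℕ) : ℝ :=
  (1 / 2) ^ S.indicator k m

lemma NullOn.of_le_tendsto (hv : Tendsto v atTop (𝓝 0)) (huv : ∀ m ∈ M, u m ≤ v m) :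
    NullOn u M := by
  intro δ hδ
  have hfin : {m | ¬ v m < δ}.Finite := by
    rw [← eventually_cofinite, Nat.cofinite_eq_atTop]
    exact hv.eventually_lt_const hδ
  exact hfin.subset fun m hm => not_lt.mpr (hm.2.trans (huv m hm.1))

lemma not_nullOn_of_infinite_inter {c : ℝ} (hc : 0 < c) (hu : ∀ m ∈ S, c ≤ u m)
    (hSM : (S ∩ M).Infinite) : ¬ NullOn u M :=
  fun h => hSM ((h c hc).subset fun m hm => ⟨hm.2, hu m hm.1⟩)

lemma infinite_sdiff_of_lt (hC : Monotone C) (hCinf : ∀ i : ℕ, (C (i + 1) \ C i).Infinite)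
    {i j : ℕ} (hij : i < j) : (C j \ C i).Infinite :=
  (hCinf i).mono (sdiff_subset_sdiff_left (hC hij))

lemma exists_tendsto_atTop_forall_exists_mem_le (hS : S.Infinite) (a : ℕ → ℕ) :
    ∃ k : ℕ → ℕ, Tendsto k atTop atTop ∧ ∀ n, ∃ l ∈ S, a n ≤ l ∧ k l ≤ n := by
  obtain ⟨L, hL, hLS⟩ : ∃ L : ℕ → ℕ, StrictMono L ∧ ∀ n, L n ∈ S ∧ a n ≤ L n :=
    extraction_forall_of_frequently fun n =>
      (Nat.frequently_atTop_iff_infinite.mpr hS).and_eventually (eventually_ge_atTop (a n))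
  refine ⟨fun l => sInf {n | l ≤ L n}, tendsto_atTop.mpr fun N => ?_,
    fun n => ⟨L n, (hLS n).1, (hLS n).2, Nat.sInf_le (le_refl (L n))⟩⟩
  filter_upwards [eventually_ge_atTop (L N)] with l hl
  exact le_csInf ⟨l, hL.le_apply⟩ fun n hn => hL.le_iff_le.mp (hl.trans hn)

lemma dyadicOn_mem_Icc (S : Set ℕ) (k : ℕ → ℕ) (m : ℕ) : dyadicOn S k m ∈ Icc (0 : ℝ) 1 :=
  ⟨by unfold dyadicOn; positivity, pow_le_one₀ (by norm_num) (by norm_num)⟩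

lemma dyadicOn_of_mem {k : ℕ → ℕ} {m : ℕ} (hm : m ∈ S) : dyadicOn S k m = (1 / 2) ^ k m := by
  rw [dyadicOn, indicator_of_mem hm]

lemma dyadicOn_of_notMem {k : ℕ → ℕ} {m : ℕ} (hm : m ∉ S) : dyadicOn S k m = 1 := by
  rw [dyadicOn, indicator_of_notMem hm, pow_zero]

lemma nullOn_dyadicOn {k : ℕ → ℕ} (hk : Tendsto k atTop atTop) : NullOn (dyadicOn S k) S :=
  .of_le_tendsto ((tendsto_pow_atTop_nhds_zero_of_lt_one (by norm_num) (by norm_num)).comp hk)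
    fun _ hm => (dyadicOn_of_mem hm).le

namespace IsStarOrder

variable {o : ℕ → ℕ}

lemma apply_zero_eq (ho : IsStarOrder C u o) (hC : Monotone C)
    (hCinf : ∀ i : ℕ, (C (i + 1) \ C i).Infinite) {j : ℕ} {c : ℝ} (hc : 0 < c)
    (hu : ∀ m ∈ C j, c ≤ u m) (hnull : NullOn u (C j)ᶜ) : o 0 = j := by
  refine (ho.isLeast_zero.2 hnull).antisymm (not_lt.mp fun hlt => ?_)
  exact not_nullOn_of_infinite_inter hc hu (infinite_sdiff_of_lt hC hCinf hlt) ho.isLeast_zero.1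

lemma le_apply (ho : IsStarOrder C u o) {n l : ℕ} (hn : 1 ≤ n) (hl : l ∉ C (o 0))
    (hul : 1 / 2 ^ n ≤ u l) : l ≤ o n :=
  not_lt.mp fun hlt => hul.not_gt ((ho.isLeast_of_one_le n hn).1 l hl hlt)

end IsStarOrder

theorem exists_starNull_forall_le_starOrder (hC : Monotone C)
    (hCinf : ∀ i : ℕ, (C (i + 1) \ C i).Infinite) (a : ℕ → ℕ) :
    ∃ u : ℕ → ℝ, (∀ m, u m ∈ Icc (0 : ℝ) 1) ∧ StarNull C u ∧
      ∀ o, IsStarOrder C u o → a ≤ o := by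
  have hcompl : (C (a 0))ᶜ.Infinite := (hCinf (a 0)).mono fun _ hm => hm.2
  obtain ⟨k, hk, hslow⟩ := exists_tendsto_atTop_forall_exists_mem_le hcompl a
  have hnull : NullOn (dyadicOn (C (a 0))ᶜ k) (C (a 0))ᶜ := nullOn_dyadicOn hk
  refine ⟨dyadicOn (C (a 0))ᶜ k, dyadicOn_mem_Icc _ k,
    ⟨a 0, (C (a 0))ᶜ, hcompl, (compl_compl _).subset, hnull⟩, fun o ho n => ?_⟩
  have ho_zero : o 0 = a 0 := ho.apply_zero_eq hC hCinf one_pos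
    (fun m hm => (dyadicOn_of_notMem (notMem_compl_iff.mpr hm)).ge) hnull
  obtain rfl | hn := Nat.eq_zero_or_pos n
  · exact ho_zero.ge
  obtain ⟨l, hl, hal, hkl⟩ := hslow n
  have hlarge : 1 / 2 ^ n ≤ dyadicOn (C (a 0))ᶜ k l := by
    rw [dyadicOn_of_mem hl, ← one_div_pow]
    exact pow_le_pow_of_le_one (by norm_num) (by norm_num) hkl
  exact hal.trans (ho.le_apply hn (ho_zero ▸ hl) hlarge)

theorem stmt_17_general {X : Type*} (hC : Monotone C)
    (hCinf : ∀ i : ℕ, (C (i + 1) \ C i).Infinite) (φ : X → ℕ → ℕ) :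
    ∃ f : ℕ → X → ℝ, (∀ n x, f n x ∈ Icc (0 : ℝ) 1) ∧ (∀ x, StarNull C (f · x)) ∧
      ∀ x o, IsStarOrder C (f · x) o → φ x ≤ o := by
  choose u hu01 hnull hle using fun x => exists_starNull_forall_le_starOrder hC hCinf (φ x)
  exact ⟨fun n x => u x n, fun n x => hu01 x n, hnull, hle⟩

end

theorem stmt_17 (C : ℕ → Set ℕ) (hC : Monotone C)
    (hCinf : ∀ i : ℕ, (C (i + 1) \ C i).Infinite) :
    ∀ φ : ℝ → ℕ → ℕ, ∃ f : ℕ → ℝ → ℝ,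
      (∀ n : ℕ, ∀ x ∈ Set.Icc (0 : ℝ) 1, f n x ∈ Set.Icc (0 : ℝ) 1) ∧
      CgStarPointwise C f (Set.Icc 0 1) ∧
      ∀ o : ℝ → ℕ → ℕ,
        (∀ x ∈ Set.Icc (0 : ℝ) 1,
          IsLeast {n : ℕ | ∀ δ : ℝ, 0 < δ →
              {m : ℕ | m ∈ (C n)ᶜ ∧ δ ≤ f m x}.Finite} (o x 0) ∧
          ∀ n : ℕ, 1 ≤ n →
            IsLeast {p : ℕ | ∀ l : ℕ, l ∉ C (o x 0) → p < l → f l x < 1 / 2 ^ n}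
              (o x n)) →
        ∀ x ∈ Set.Icc (0 : ℝ) 1, ∀ n : ℕ, φ x n ≤ o x n := by
  intro φ
  obtain ⟨f, hf01, hnull, hle⟩ := stmt_17_general hC hCinf φ
  exact ⟨f, fun n x _ => hf01 n x, fun x _ => hnull x,
    fun o ho x hx => hle x (o x) ⟨(ho x hx).1, (ho x hx).2⟩⟩
end

section
/- Assume that every subset of ℝ of cardinality less than the continuum is Lebesgue-null (i.e. non(N) = 𝔠), and that there exists a set Z ⊆ ℕ^ℕ of cardinality continuum such that every meagre subset of Z has cardinality less than the continuum (a 𝔠-Lusin set). Let C : ℕ → 𝒫(ℕ) be a nondecreasing sequence of subsets of ℕ, each with infinite complement ℕ \ C_n, generating the ideal I = {A ⊆ ℕ : A ⊆ C_k for some k}. Then there exist a sequence f_n : [0,1] → [0,1] converging to 0 I*-pointwise on [0,1], and ε > 0, such that for every A ⊆ [0,1] with m*(A) ≥ 1 − ε, the sequence does not converge to 0 I*-uniformly on A. -/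
open MeasureTheory Filter Set

/-!
Send `z : ℕ → ℕ` to the sequence `n ↦ ∑ 2⁻⁽ʲ⁺¹⁾` over the `j` with `n ≤ z j`. It tends to `0` for
each `z`, but a uniform rate of convergence on a set of `z`s, even along a subsequence, bounds every
coordinate on that set. Bounded sets are nowhere dense in Baire space, so they meet a `𝔠`-Lusin set
`Z` in fewer than `𝔠` points. Pulling the sequence back along an injection `ℝ → Z`, a set of
uniform convergence has fewer than `𝔠` points and is therefore null.
-/

open Topology

open scoped Cardinal

theorem isNowhereDense_of_bddAbove_pi {ι : Type*} [Infinite ι] {α : ι → Type*}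
    [∀ i, Preorder (α i)] [∀ i, NoMaxOrder (α i)] [∀ i, TopologicalSpace (α i)]
    [∀ i, ClosedIicTopology (α i)] {s : Set (∀ i, α i)} (hs : BddAbove s) :
    IsNowhereDense s := by
  classical
  obtain ⟨b, hb⟩ := hs
  suffices IsNowhereDense (Iic b) from this.mono hb
  have hclosed : IsClosed (Iic b) := by
    simpa only [pi_univ_Iic] using isClosed_set_pi fun i (_ : i ∈ univ) ↦ isClosed_Iic (a := b i)
  rw [hclosed.isNowhereDense_iff, eq_empty_iff_forall_notMem]
  intro z hz
  choose c hc using fun i ↦ exists_gt (b i)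
  have hlim : Tendsto (fun i ↦ Function.update z i (c i)) cofinite (𝓝 z) := by
    refine tendsto_pi_nhds.2 fun j ↦ tendsto_const_nhds.congr' ?_
    filter_upwards [eventually_cofinite_ne j] with i hij
    rw [Function.update_of_ne hij.symm]
  obtain ⟨i, hi⟩ := (hlim.eventually (mem_interior_iff_mem_nhds.1 hz)).exists
  have hci : c i ≤ b i := by simpa only [Function.update_self] using hi i
  exact (hc i).not_ge hci

/-- The mass of the superlevel set `{j | n ≤ z j}` when `j : ℕ` carries mass `2⁻⁽ʲ⁺¹⁾`. As `n`
varies, this is the sequence of functions on Baire space from which the counterexample is built. -/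
noncomputable def superlevelMass (n : ℕ) (z : ℕ → ℕ) : ℝ :=
  ∑' j, {j | n ≤ z j}.indicator (fun j ↦ 1 / 2 / 2 ^ j) j

namespace superlevelMass

theorem summable (n : ℕ) (z : ℕ → ℕ) :
    Summable ({j | n ≤ z j}.indicator fun j ↦ (1 / 2 / 2 ^ j : ℝ)) :=
  (summable_geometric_two' 1).indicator _

theorem nonneg (n : ℕ) (z : ℕ → ℕ) : 0 ≤ superlevelMass n z :=
  tsum_nonneg fun j ↦ indicator_nonneg (fun _ _ ↦ by positivity) j

theorem le_one (n : ℕ) (z : ℕ → ℕ) : superlevelMass n z ≤ 1 :=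
  calc
    superlevelMass n z ≤ ∑' j : ℕ, (1 / 2 / 2 ^ j : ℝ) :=
      (summable n z).tsum_le_tsum (fun j ↦ indicator_le_self' (fun _ _ ↦ by positivity) j)
        (summable_geometric_two' 1)
    _ = 1 := tsum_geometric_two' 1

theorem le_of_le_apply {n j : ℕ} {z : ℕ → ℕ} (h : n ≤ z j) :
    1 / 2 / 2 ^ j ≤ superlevelMass n z :=
  calc
    (1 / 2 / 2 ^ j : ℝ) = {j | n ≤ z j}.indicator (fun j ↦ 1 / 2 / 2 ^ j) j :=
      (indicator_of_mem (s := {j | n ≤ z j}) h fun j ↦ 1 / 2 / 2 ^ j).symm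
    _ ≤ superlevelMass n z :=
      (summable n z).le_tsum j fun i _ ↦ indicator_nonneg (fun _ _ ↦ by positivity) i

theorem tendsto_zero (z : ℕ → ℕ) : Tendsto (superlevelMass · z) atTop (𝓝 0) := by
  have hterm (j : ℕ) : Tendsto (fun n ↦ {j | n ≤ z j}.indicator (fun j ↦ (1 / 2 / 2 ^ j : ℝ)) j)
      atTop (𝓝 0) := by
    refine tendsto_const_nhds.congr' ?_
    filter_upwards [eventually_gt_atTop (z j)] with n hn
    exact (indicator_of_notMem (s := {j | n ≤ z j}) hn.not_ge _).symm
  have hbound (n j : ℕ) :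
      ‖{j | n ≤ z j}.indicator (fun j ↦ (1 / 2 / 2 ^ j : ℝ)) j‖ ≤ 1 / 2 / 2 ^ j :=
    (norm_indicator_le_norm_self _ j).trans_eq (Real.norm_of_nonneg (by positivity))
  simpa only [superlevelMass, tsum_zero] using
    tendsto_tsum_of_dominated_convergence (summable_geometric_two' 1) hterm (.of_forall hbound)

theorem bddAbove_image_of_tendstoUniformlyOn {X : Type*} {g : X → ℕ → ℕ} {A : Set X}
    {l : Filter ℕ} [l.NeBot]
    (h : TendstoUniformlyOn (fun n x ↦ superlevelMass n (g x)) 0 l A) : BddAbove (g '' A) := by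
  have hcoord (j : ℕ) : ∃ n, ∀ x ∈ A, g x j < n := by
    have hlt := Metric.tendstoUniformlyOn_iff.1 h (1 / 2 / 2 ^ j) (by positivity)
    refine hlt.exists.imp fun n hn x hx ↦ ?_
    by_contra! hle
    refine (hn x hx).not_ge ?_
    rw [Pi.zero_apply, dist_zero_left, Real.norm_of_nonneg (nonneg _ _)]
    exact le_of_le_apply hle
  choose b hb using hcoord
  exact ⟨b, forall_mem_image.2 fun x hx j ↦ (hb j x hx).le⟩

end superlevelMass

theorem CgStarPointwise.of_tendsto {C : ℕ → Set ℕ} {f : ℕ → ℝ → ℝ} {A : Set ℝ}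
    (h : ∀ x ∈ A, Tendsto (f · x) atTop (𝓝 0)) : CgStarPointwise C f A := by
  refine fun x hx ↦ ⟨0, univ, infinite_univ, by simp, fun δ hδ ↦ ?_⟩
  have hev : ∀ᶠ m in cofinite, f m x < δ := by
    simpa only [Nat.cofinite_eq_atTop] using (h x hx).eventually_lt_const hδ
  simpa only [mem_univ, true_and, eventually_cofinite, not_lt] using hev

theorem CgStarUniform.exists_tendstoUniformlyOn {C : ℕ → Set ℕ} {f : ℕ → ℝ → ℝ} {A : Set ℝ}
    (hf : ∀ n, ∀ x ∈ A, 0 ≤ f n x) (h : CgStarUniform C f A) :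
    ∃ l : Filter ℕ, l.NeBot ∧ TendstoUniformlyOn f 0 l A := by
  obtain ⟨-, M, hM, -, hunif⟩ := h
  refine ⟨atTop ⊓ 𝓟 M, frequently_mem_iff_neBot.1 (Nat.frequently_atTop_iff_infinite.2 hM),
    Metric.tendstoUniformlyOn_iff.2 fun δ hδ ↦ eventually_inf_principal.2 ?_⟩
  obtain ⟨p, hp⟩ := hunif δ hδ
  filter_upwards [eventually_ge_atTop p] with m hpm hm x hx
  rw [Pi.zero_apply, dist_zero_left, Real.norm_of_nonneg (hf m x hx)]
  exact hp x hx m hm hpm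

theorem stmt_18_general {X : Type} [MeasurableSpace X] {μ : Measure X} {κ : Cardinal}
    (hμ : ∀ s : Set X, #s < κ → μ s = 0) {Z : Set (ℕ → ℕ)} (hXZ : #X ≤ #Z)
    (hZ : ∀ B ⊆ Z, BddAbove B → #B < κ) :
    ∃ f : ℕ → X → ℝ,
      (∀ n x, f n x ∈ Icc (0 : ℝ) 1) ∧
      (∀ x, Tendsto (f · x) atTop (𝓝 0)) ∧
      ∀ A : Set X, μ A ≠ 0 → ∀ l : Filter ℕ, l.NeBot → ¬ TendstoUniformlyOn f 0 l A := by
  obtain ⟨e⟩ : Nonempty (X ↪ Z) := hXZ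
  let g : X → ℕ → ℕ := fun x ↦ e x
  have hg : Function.Injective g := Subtype.val_injective.comp e.injective
  refine ⟨fun n x ↦ superlevelMass n (g x),
    fun n x ↦ ⟨superlevelMass.nonneg n (g x), superlevelMass.le_one n (g x)⟩,
    fun x ↦ superlevelMass.tendsto_zero (g x), fun A hA l _ hunif ↦ hA (hμ A ?_)⟩
  have hbdd : BddAbove (g '' A) := superlevelMass.bddAbove_image_of_tendstoUniformlyOn hunif
  have hgZ : g '' A ⊆ Z := image_subset_iff.2 fun x _ ↦ (e x).2
  calc
    #A = #(g '' A) := (Cardinal.mk_image_eq hg).symm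
    _ < κ := hZ _ hgZ hbdd

theorem stmt_18
    (hnon : ∀ s : Set ℝ, Cardinal.mk s < Cardinal.continuum → volume s = 0)
    (hLusin : ∃ Z : Set (ℕ → ℕ), Cardinal.mk Z = Cardinal.continuum ∧
      ∀ M ⊆ Z, IsMeagre M → Cardinal.mk M < Cardinal.continuum)
    (C : ℕ → Set ℕ) (hC : Monotone C)
    (hCinf : ∀ n : ℕ, (C n)ᶜ.Infinite) :
    ∃ f : ℕ → ℝ → ℝ,
      (∀ n : ℕ, ∀ x ∈ Set.Icc (0 : ℝ) 1, f n x ∈ Set.Icc (0 : ℝ) 1) ∧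
      CgStarPointwise C f (Set.Icc 0 1) ∧
      ∃ ε : ℝ, 0 < ε ∧
        ∀ A ⊆ Set.Icc (0 : ℝ) 1, ENNReal.ofReal (1 - ε) ≤ volume A →
          ¬ CgStarUniform C f A := by
  obtain ⟨Z, hZ, hZsmall⟩ := hLusin
  obtain ⟨f, hf, hlim, hunif⟩ := stmt_18_general hnon (Cardinal.mk_real.trans hZ.symm).le
    fun B hBZ hB ↦ hZsmall B hBZ (isNowhereDense_of_bddAbove_pi hB).isMeagre
  refine ⟨f, fun n x _ ↦ hf n x, .of_tendsto fun x _ ↦ hlim x, 1 / 2, by norm_num,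
    fun A _ hA hu ↦ ?_⟩
  obtain ⟨l, hl, hfl⟩ := hu.exists_tendstoUniformlyOn fun n x _ ↦ (hf n x).1
  have hA_pos : 0 < volume A := (ENNReal.ofReal_pos.2 (by norm_num)).trans_le hA
  exact hunif A hA_pos.ne' l hl hfl
end
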